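/- For every real parameter a there exists a three times continuously differentiable function H : ℝ → ℝ with H(ξ) > 0 for all ξ, satisfying (H'''(ξ) + ξ² + a)·H(ξ)³ = 1 for all ξ ∈ ℝ, and such that |ξ|^{2/3}·H(ξ) → 1 both as ξ → +∞ and as ξ → −∞. -/

import Mathlib

open Filter
open Set Filter

lemma tf_mono {g g1 : ℝ → ℝ} {x0 x1 : ℝ} (h01 : x0 ≤ x1)
    (h : ∀ x ∈ Icc x0 x1, HasDerivAt g (g1 x) x) (hc : ∀ x ∈ Icc x0 x1, 0 ≤ g1 x) :
    g x0 ≤ g x1 := by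
  have hm : MonotoneOn g (Icc x0 x1) := by
    apply monotoneOn_of_hasDerivWithinAt_nonneg (f' := g1) (convex_Icc x0 x1)
    · intro x hx
      exact (h x hx).continuousAt.continuousWithinAt
    · intro x hx
      exact (h x (interior_subset hx)).hasDerivWithinAt
    · intro x hx
      exact hc x (interior_subset hx)
  exact hm (left_mem_Icc.2 h01) (right_mem_Icc.2 h01) h01

lemma tf_taylor1 {f f1 : ℝ → ℝ} {x0 x1 c : ℝ} (h01 : x0 ≤ x1)
    (h : ∀ x ∈ Icc x0 x1, HasDerivAt f (f1 x) x) (hc : ∀ x ∈ Icc x0 x1, c ≤ f1 x) :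
    f x0 + c * (x1 - x0) ≤ f x1 := by
  have := tf_mono (g := fun x => f x - c * x) (g1 := fun x => f1 x - c * 1) h01
    (fun x hx => (h x hx).sub ((hasDerivAt_id x).const_mul c))
    (fun x hx => by have := hc x hx; linarith)
  linarith

lemma tf_taylor2 {f f1 f2 : ℝ → ℝ} {x0 x1 c : ℝ} (h01 : x0 ≤ x1)
    (h : ∀ x ∈ Icc x0 x1, HasDerivAt f (f1 x) x)
    (h1 : ∀ x ∈ Icc x0 x1, HasDerivAt f1 (f2 x) x) (hc : ∀ x ∈ Icc x0 x1, c ≤ f2 x) :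
    f x0 + f1 x0 * (x1 - x0) + c * (x1 - x0) ^ 2 / 2 ≤ f x1 := by
  have := tf_mono (g := fun x => f x - f1 x0 * x - c / 2 * (x - x0) ^ 2)
    (g1 := fun x => f1 x - f1 x0 * 1 - c / 2 * (2 * (x - x0))) h01
    (fun x hx => by
      have h2 : HasDerivAt (fun x => (x - x0) ^ 2) (2 * (x - x0)) x := by
        simpa using ((hasDerivAt_id x).sub_const x0).fun_pow 2
      exact ((h x hx).sub ((hasDerivAt_id x).const_mul _)).sub (h2.const_mul _))
    (fun x hx => by
      have := tf_taylor1 (x1 := x) hx.1 (fun y hy => h1 y ⟨hy.1, hy.2.trans hx.2⟩)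
        (fun y hy => hc y ⟨hy.1, hy.2.trans hx.2⟩)
      linarith)
  nlinarith

lemma tf_taylor3 {f f1 f2 f3 : ℝ → ℝ} {x0 x1 c : ℝ} (h01 : x0 ≤ x1)
    (h : ∀ x ∈ Icc x0 x1, HasDerivAt f (f1 x) x)
    (h1 : ∀ x ∈ Icc x0 x1, HasDerivAt f1 (f2 x) x)
    (h2 : ∀ x ∈ Icc x0 x1, HasDerivAt f2 (f3 x) x) (hc : ∀ x ∈ Icc x0 x1, c ≤ f3 x) :
    f x0 + f1 x0 * (x1 - x0) + f2 x0 * (x1 - x0) ^ 2 / 2 + c * (x1 - x0) ^ 3 / 6 ≤ f x1 := by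
  have := tf_mono (g := fun x => f x - f1 x0 * x - f2 x0 / 2 * (x - x0) ^ 2 - c / 6 * (x - x0) ^ 3)
    (g1 := fun x => f1 x - f1 x0 * 1 - f2 x0 / 2 * (2 * (x - x0)) - c / 6 * (3 * (x - x0) ^ 2)) h01
    (fun x hx => by
      have h2 : HasDerivAt (fun x => (x - x0) ^ 2) (2 * (x - x0)) x := by
        simpa using ((hasDerivAt_id x).sub_const x0).fun_pow 2
      have h3 : HasDerivAt (fun x => (x - x0) ^ 3) (3 * (x - x0) ^ 2) x := by
        simpa using ((hasDerivAt_id x).sub_const x0).fun_pow 3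
      exact (((h x hx).sub ((hasDerivAt_id x).const_mul _)).sub (h2.const_mul _)).sub
        (h3.const_mul _))
    (fun x hx => by
      have := tf_taylor2 (x1 := x) hx.1 (fun y hy => h1 y ⟨hy.1, hy.2.trans hx.2⟩)
        (fun y hy => h2 y ⟨hy.1, hy.2.trans hx.2⟩)
        (fun y hy => hc y ⟨hy.1, hy.2.trans hx.2⟩)
      linarith)
  nlinarith

/-- two-sided third order Taylor estimate to the right -/
lemma tf_taylor3_abs {f f1 f2 f3 : ℝ → ℝ} {x0 x1 B : ℝ} (h01 : x0 ≤ x1)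
    (h : ∀ x ∈ Icc x0 x1, HasDerivAt f (f1 x) x)
    (h1 : ∀ x ∈ Icc x0 x1, HasDerivAt f1 (f2 x) x)
    (h2 : ∀ x ∈ Icc x0 x1, HasDerivAt f2 (f3 x) x) (hc : ∀ x ∈ Icc x0 x1, |f3 x| ≤ B) :
    |f x1 - (f x0 + f1 x0 * (x1 - x0) + f2 x0 * (x1 - x0) ^ 2 / 2)| ≤ B * (x1 - x0) ^ 3 / 6 := by
  have a1 := tf_taylor3 h01 h h1 h2 (c := -B) (fun x hx => (abs_le.1 (hc x hx)).1)
  have a2 := tf_taylor3 (f := fun x => - f x) (f1 := fun x => - f1 x) (f2 := fun x => - f2 x)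
    (f3 := fun x => - f3 x) h01 (fun x hx => (h x hx).neg) (fun x hx => (h1 x hx).neg)
    (fun x hx => (h2 x hx).neg) (c := -B) (fun x hx => by have := (abs_le.1 (hc x hx)).2; linarith)
  rw [abs_le]
  constructor <;> linarith

lemma tf_taylor2_abs {f f1 f2 : ℝ → ℝ} {x0 x1 B : ℝ} (h01 : x0 ≤ x1)
    (h : ∀ x ∈ Icc x0 x1, HasDerivAt f (f1 x) x)
    (h1 : ∀ x ∈ Icc x0 x1, HasDerivAt f1 (f2 x) x) (hc : ∀ x ∈ Icc x0 x1, |f2 x| ≤ B) :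
    |f x1 - (f x0 + f1 x0 * (x1 - x0))| ≤ B * (x1 - x0) ^ 2 / 2 := by
  have a1 := tf_taylor2 h01 h h1 (c := -B) (fun x hx => (abs_le.1 (hc x hx)).1)
  have a2 := tf_taylor2 (f := fun x => - f x) (f1 := fun x => - f1 x) (f2 := fun x => - f2 x)
    h01 (fun x hx => (h x hx).neg) (fun x hx => (h1 x hx).neg)
    (c := -B) (fun x hx => by have := (abs_le.1 (hc x hx)).2; linarith)
  rw [abs_le]
  constructor <;> linarith

/-- reflection of derivatives -/
lemma tf_refl {f : ℝ → ℝ} {f' x : ℝ} (h : HasDerivAt f f' (-x)) :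
    HasDerivAt (fun y => f (-y)) (-f') x := by
  have := h.comp x (hasDerivAt_neg x)
  simpa [Function.comp_def] using this

/-- symmetric interval version of the second-order estimate -/
lemma tf_taylor2_sym {f f1 f2 : ℝ → ℝ} {R B x y : ℝ}
    (h : ∀ x ∈ Icc (-R) R, HasDerivAt f (f1 x) x)
    (h1 : ∀ x ∈ Icc (-R) R, HasDerivAt f1 (f2 x) x) (hc : ∀ x ∈ Icc (-R) R, |f2 x| ≤ B)
    (hx : x ∈ Icc (-R) R) (hy : y ∈ Icc (-R) R) :
    |f y - (f x + f1 x * (y - x))| ≤ B * (y - x) ^ 2 / 2 := by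
  rcases le_total x y with hxy | hxy
  · have hs : ∀ z ∈ Icc x y, z ∈ Icc (-R) R := fun z hz => ⟨hx.1.trans hz.1, hz.2.trans hy.2⟩
    exact tf_taylor2_abs hxy (fun z hz => h z (hs z hz)) (fun z hz => h1 z (hs z hz))
      (fun z hz => hc z (hs z hz))
  · have hs : ∀ z ∈ Icc (-x) (-y), -z ∈ Icc (-R) R := fun z hz =>
      ⟨by linarith [hy.1, hz.2], by linarith [hx.2, hz.1]⟩
    have := tf_taylor2_abs (f := fun z => f (-z)) (f1 := fun z => - f1 (-z))
      (f2 := fun z => f2 (-z)) (neg_le_neg hxy) (fun z hz => tf_refl (h _ (hs z hz)))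
      (fun z hz => by simpa using (tf_refl (h1 _ (hs z hz))).fun_neg) (fun z hz => hc _ (hs z hz))
    simp only [neg_neg] at this
    convert this using 2 <;> ring
    
/-- interior bounds for derivatives -/
lemma tf_interp {f f1 f2 f3 : ℝ → ℝ} {x A B : ℝ}
    (h : ∀ y ∈ Icc (x-1) (x+1), HasDerivAt f (f1 y) y)
    (h1 : ∀ y ∈ Icc (x-1) (x+1), HasDerivAt f1 (f2 y) y)
    (h2 : ∀ y ∈ Icc (x-1) (x+1), HasDerivAt f2 (f3 y) y)
    (hA : ∀ y ∈ Icc (x-1) (x+1), |f y| ≤ A)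
    (hB : ∀ y ∈ Icc (x-1) (x+1), |f3 y| ≤ B) :
    |f1 x| ≤ A + B ∧ |f2 x| ≤ 4 * A + B := by
  have hs : ∀ z ∈ Icc x (x+1), z ∈ Icc (x-1) (x+1) := fun z hz => ⟨by linarith [hz.1], hz.2⟩
  have hs' : ∀ z ∈ Icc (-x) (-x+1), -z ∈ Icc (x-1) (x+1) := fun z hz =>
    ⟨by linarith [hz.2], by linarith [hz.1]⟩
  have a1 := tf_taylor3_abs (x0 := x) (x1 := x + 1) (by linarith) (fun z hz => h z (hs z hz))
    (fun z hz => h1 z (hs z hz)) (fun z hz => h2 z (hs z hz)) (fun z hz => hB z (hs z hz))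
  have a2 := tf_taylor3_abs (f := fun z => f (-z)) (f1 := fun z => - f1 (-z))
      (f2 := fun z => f2 (-z)) (f3 := fun z => - f3 (-z)) (B := B) (x0 := -x) (x1 := -x+1)
      (by linarith) (fun z hz => tf_refl (h _ (hs' z hz)))
      (fun z hz => by simpa using (tf_refl (h1 _ (hs' z hz))).fun_neg)
      (fun z hz => tf_refl (h2 _ (hs' z hz)))
      (fun z hz => by rw [abs_neg]; exact hB _ (hs' z hz))
  simp only [neg_neg] at a2
  have e1 : -(-x + 1) = x - 1 := by ring
  have e2 : -x + 1 - -x = 1 := by ring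
  have e3 : x + 1 - x = 1 := by ring
  rw [e1, e2] at a2
  rw [e3] at a1
  have b1 := abs_le.1 (hA (x-1) ⟨le_rfl, by linarith⟩)
  have b2 := abs_le.1 (hA (x+1) ⟨by linarith, le_rfl⟩)
  have b3 := abs_le.1 (hA x ⟨by linarith, by linarith⟩)
  have b4 := (abs_nonneg _).trans (hB x ⟨by linarith, by linarith⟩)
  have a1 := abs_le.1 a1
  have a2 := abs_le.1 a2
  constructor <;> rw [abs_le] <;> constructor <;> linarith [a1.1, a1.2, a2.1, a2.2, b1.1, b1.2, b2.1, b2.2, b3.1, b3.2]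

lemma tf_shoot (F : ℝ → ℝ → ℝ) (t0 t1 : ℝ) (h01 : t0 < t1)
    (hFc : ∀ y, Continuous (fun t => F t y)) (K : NNReal) (hLip : ∀ t, LipschitzWith K (F t))
    (B : ℝ) (hB : ∀ t ∈ Icc (t0 - 1) (t1 + 1), ∀ y, |F t y| ≤ B) (p q r : ℝ) :
    ∃ u v z : ℝ → ℝ, (∀ t ∈ Icc t0 t1, HasDerivAt u (v t) t ∧ HasDerivAt v (z t) t ∧
      HasDerivAt z (F t (u t)) t) ∧ u t0 = p ∧ v t0 = q ∧ u t1 = r := by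
  have hB0 : 0 ≤ B := (abs_nonneg _).trans (hB t0 ⟨by linarith, by linarith⟩ 0)
  set T := t1 - t0 with hT
  have hTpos : 0 < T := by linarith
  set l : ℝ := 1 / (4 * (T + 2)) with hl
  have hlpos : 0 < l := by positivity
  have hlT : l * (T + 2) = 1 / 4 := by rw [hl]; field_simp
  set f : ℝ → (ℝ × ℝ × ℝ) → (ℝ × ℝ × ℝ) := fun t w => (l * w.2.1, l * w.2.2, F t w.1 / l ^ 2)
    with hf
  obtain ⟨S, hS⟩ : ∃ S : ℝ, S * T ^ 2 / 2 = |p| + |q| * T + B * T ^ 3 / 6 + |r| :=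
    ⟨2 * (|p| + |q| * T + B * T ^ 3 / 6 + |r|) / T ^ 2, by field_simp⟩
  have hS0 : 0 ≤ S := by
    by_contra hneg
    push Not at hneg
    have : S * T ^ 2 / 2 < 0 := by
      have : 0 < T ^ 2 := by positivity
      nlinarith
    have : 0 ≤ |p| + |q| * T + B * T ^ 3 / 6 + |r| := by positivity
    linarith
  set ρ : ℝ := |p| + |q| / l + S / l ^ 2 with hρ
  have hρ0 : 0 ≤ ρ := by positivity
  set A : ℝ := 2 * ρ + 4 * (B / l ^ 2 * (T + 2)) with hA
  have hA0 : 0 ≤ A := by positivity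
  set L : ℝ := l * A + B / l ^ 2 with hL
  have hL0 : 0 ≤ L := by positivity
  obtain ⟨Kl, hKl⟩ : ∃ Kl : NNReal, (Kl : ℝ) = K / l ^ 2 :=
    ⟨Real.toNNReal (K / l ^ 2), Real.coe_toNNReal _ (by positivity)⟩
  have hPL : IsPicardLindelof f (tmin := t0 - 1) (tmax := t1 + 1)
      ⟨t0, by constructor <;> linarith⟩ (0 : ℝ × ℝ × ℝ) ⟨A, hA0⟩ ⟨ρ, hρ0⟩ ⟨L, hL0⟩
      (max (⟨l, hlpos.le⟩) (max (⟨l, hlpos.le⟩) Kl)) := by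
    constructor
    · intro t ht
      apply LipschitzWith.lipschitzOnWith
      refine LipschitzWith.prodMk ?_ (LipschitzWith.prodMk ?_ ?_)
      · apply LipschitzWith.of_dist_le_mul
        intro x y
        rw [Real.dist_eq, ← mul_sub, abs_mul, abs_of_pos hlpos]
        apply mul_le_mul_of_nonneg_left _ hlpos.le
        rw [← Real.dist_eq]
        exact (le_max_left _ _).trans (le_max_right _ _)
      · apply LipschitzWith.of_dist_le_mul
        intro x y
        rw [Real.dist_eq, ← mul_sub, abs_mul, abs_of_pos hlpos]
        apply mul_le_mul_of_nonneg_left _ hlpos.le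
        rw [← Real.dist_eq]
        exact (le_max_right _ _).trans (le_max_right _ _)
      · apply LipschitzWith.of_dist_le_mul
        intro x y
        have h1 := (hLip t).dist_le_mul x.1 y.1
        have h2 : dist x.1 y.1 ≤ dist x y := le_max_left _ _
        rw [Real.dist_eq, ← sub_div, abs_div, abs_of_pos (show 0 < l ^ 2 by positivity)]
        rw [Real.dist_eq] at h1
        rw [hKl, div_mul_eq_mul_div]
        gcongr
        exact h1.trans (by gcongr)
    · intro x hx
      apply Continuous.continuousOn
      have := hFc x.1
      simp only [hf]
      fun_prop
    · intro t ht x hx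
      rw [mem_closedBall_zero_iff] at hx
      change ‖x‖ ≤ A at hx
      have h1 : ‖x.2.1‖ ≤ A := ((norm_fst_le x.2).trans (norm_snd_le x)).trans hx
      have h2 : ‖x.2.2‖ ≤ A := ((norm_snd_le x.2).trans (norm_snd_le x)).trans hx
      have h3 := hB t ht x.1
      have hb : 0 ≤ B / l ^ 2 := by positivity
      have hla : 0 ≤ l * A := by positivity
      change ‖f t x‖ ≤ L
      simp only [hf]
      rw [Prod.norm_mk, Prod.norm_mk]
      refine max_le ?_ (max_le ?_ ?_)
      · rw [norm_mul, Real.norm_eq_abs, abs_of_pos hlpos]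
        have := mul_le_mul_of_nonneg_left h1 hlpos.le
        linarith
      · rw [norm_mul, Real.norm_eq_abs, abs_of_pos hlpos]
        have := mul_le_mul_of_nonneg_left h2 hlpos.le
        linarith
      · rw [norm_div, Real.norm_eq_abs, Real.norm_eq_abs, abs_of_pos (show 0 < l ^ 2 by positivity)]
        have : |F t x.1| / l ^ 2 ≤ B / l ^ 2 := by gcongr
        linarith
    · change L * max (t1 + 1 - t0) (t0 - (t0 - 1)) ≤ A - ρ
      have : max (t1 + 1 - t0) (t0 - (t0 - 1)) ≤ T + 2 := by
        apply max_le <;> linarith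
      have := mul_le_mul_of_nonneg_left this hL0
      have h2 : L * (T + 2) = A * (l * (T + 2)) + B / l ^ 2 * (T + 2) := by rw [hL]; ring
      rw [hlT] at h2
      have : 0 ≤ B / l ^ 2 * (T + 2) := by positivity
      linarith
  obtain ⟨α, hα, L', hL'⟩ := hPL.exists_forall_mem_closedBall_eq_hasDerivWithinAt_lipschitzOnWith
  have hball : ∀ s ∈ Icc (-S) S, ((p, q / l, s / l ^ 2) : ℝ × ℝ × ℝ) ∈
      Metric.closedBall (0 : ℝ × ℝ × ℝ) ((⟨ρ, hρ0⟩ : NNReal) : ℝ) := by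
    intro s hs
    rw [mem_closedBall_zero_iff, Prod.norm_mk, Prod.norm_mk]
    change _ ≤ ρ
    have c1 : 0 ≤ |p| := abs_nonneg _
    have c2 : 0 ≤ |q| / l := by positivity
    have c3 : 0 ≤ S / l ^ 2 := by positivity
    refine max_le ?_ (max_le ?_ ?_)
    · rw [Real.norm_eq_abs]; linarith
    · rw [norm_div, Real.norm_eq_abs, Real.norm_eq_abs, abs_of_pos hlpos]; linarith
    · rw [norm_div, Real.norm_eq_abs, Real.norm_eq_abs, abs_of_pos (show 0 < l ^ 2 by positivity)]
      have : |s| ≤ S := abs_le.2 hs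
      have : |s| / l ^ 2 ≤ S / l ^ 2 := by gcongr
      linarith
  have key : ∀ s ∈ Icc (-S) S, ∃ u v z : ℝ → ℝ, (∀ t ∈ Icc t0 t1, HasDerivAt u (v t) t ∧
      HasDerivAt v (z t) t ∧ HasDerivAt z (F t (u t)) t) ∧ u t0 = p ∧ v t0 = q ∧ z t0 = s ∧
      u t1 = (α (p, q / l, s / l ^ 2) t1).1 := by
    intro s hs
    obtain ⟨hi, hd⟩ := hα _ (hball s hs)
    set β := α (p, q / l, s / l ^ 2) with hβ
    refine ⟨fun t => (β t).1, fun t => l * (β t).2.1, fun t => l ^ 2 * (β t).2.2, ?_, ?_, ?_, ?_, rfl⟩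
    · intro t ht
      have hd' := (hd t ⟨by linarith [ht.1], by linarith [ht.2]⟩).hasDerivAt
        (Icc_mem_nhds (by linarith [ht.1]) (by linarith [ht.2]))
      have e0 := (ContinuousLinearMap.snd ℝ ℝ (ℝ × ℝ)).hasFDerivAt.comp_hasDerivAt t hd'
      have e1 : HasDerivAt (fun t => (β t).1) (l * (β t).2.1) t :=
        (ContinuousLinearMap.fst ℝ ℝ (ℝ × ℝ)).hasFDerivAt.comp_hasDerivAt t hd'
      have e2 : HasDerivAt (fun t => (β t).2.1) (l * (β t).2.2) t :=
        (ContinuousLinearMap.fst ℝ ℝ ℝ).hasFDerivAt.comp_hasDerivAt t e0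
      have e3 : HasDerivAt (fun t => (β t).2.2) (F t (β t).1 / l ^ 2) t :=
        (ContinuousLinearMap.snd ℝ ℝ ℝ).hasFDerivAt.comp_hasDerivAt t e0
      refine ⟨e1, ?_, ?_⟩
      · have h := e2.const_mul l
        rw [← mul_assoc, ← pow_two] at h
        exact h
      · have h := e3.const_mul (l ^ 2)
        rw [mul_div_cancel₀ _ (by positivity)] at h
        exact h
    · simp only at hi ⊢; rw [hi]
    · simp only at hi ⊢; rw [hi]; field_simp
    · simp only at hi ⊢; rw [hi]; field_simp
  have hest : ∀ s ∈ Icc (-S) S, |(α (p, q / l, s / l ^ 2) t1).1 - (p + q * T + s * T ^ 2 / 2)|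
      ≤ B * T ^ 3 / 6 := by
    intro s hs
    obtain ⟨u, v, z, hd, h1, h2, h3, h4⟩ := key s hs
    have := tf_taylor3_abs (B := B) h01.le (fun t ht => (hd t ht).1) (fun t ht => (hd t ht).2.1)
      (fun t ht => (hd t ht).2.2) (fun t ht => hB t ⟨by linarith [ht.1], by linarith [ht.2]⟩ _)
    rw [h1, h2, h3, h4] at this
    exact this
  have hcont : ContinuousOn (fun s => (α (p, q / l, s / l ^ 2) t1).1) (Icc (-S) S) := by
    apply continuous_fst.comp_continuousOn
    apply ContinuousOn.comp (hL' t1 ⟨by linarith, by linarith⟩).continuousOn _ hball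
    fun_prop
  have hiv := intermediate_value_Icc (by linarith : -S ≤ S) hcont
  have hr : r ∈ Icc ((α (p, q / l, (-S) / l ^ 2) t1).1) ((α (p, q / l, S / l ^ 2) t1).1) := by
    have g1 := abs_le.1 (hest (-S) ⟨le_rfl, by linarith⟩)
    have g2 := abs_le.1 (hest S ⟨by linarith, le_rfl⟩)
    have c1 := abs_le.1 (le_refl |p|)
    have c2 := abs_le.1 (le_refl |q|)
    have c3 := abs_le.1 (le_refl |r|)
    have c4 : q * T ≤ |q| * T := by gcongr; exact c2.2
    have c5 : -(|q| * T) ≤ q * T := by nlinarith [c2.1]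
    constructor <;> linarith [g1.1, g1.2, g2.1, g2.2, c1.1, c1.2, c3.1, c3.2]
  obtain ⟨s, hs, hsr⟩ := hiv hr
  obtain ⟨u, v, z, hd, h1, h2, h3, h4⟩ := key s hs
  exact ⟨u, v, z, hd, h1, h2, h4.trans hsr⟩

/-- the model profile -/
noncomputable def tfphi (x : ℝ) : ℝ := (1 + x ^ 2) ^ (-(1 / 3 : ℝ))

lemma tfphi_pos (x : ℝ) : 0 < tfphi x := by
  unfold tfphi; positivity

lemma tfphi_cube (x : ℝ) : tfphi x ^ 3 * (1 + x ^ 2) = 1 := by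
  unfold tfphi
  have h : (0 : ℝ) < 1 + x ^ 2 := by positivity
  rw [← Real.rpow_natCast, ← Real.rpow_mul h.le]
  norm_num
  rw [Real.rpow_neg_one]
  field_simp

lemma tfphi_le_one (x : ℝ) : tfphi x ≤ 1 := by
  have h := tfphi_cube x
  have hp := tfphi_pos x
  by_contra hc
  push Not at hc
  have : 1 < tfphi x ^ 3 := one_lt_pow₀ hc (by norm_num)
  nlinarith [sq_nonneg x]

lemma tfphi_deriv (x : ℝ) : HasDerivAt tfphi (-(2 / 3) * x * tfphi x ^ 4) x := by
  have h : (0 : ℝ) < 1 + x ^ 2 := by positivity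
  have h1 : HasDerivAt (fun x : ℝ => 1 + x ^ 2) (2 * x) x := by
    simpa using ((hasDerivAt_id x).fun_pow 2).const_add 1
  have h2 := h1.rpow_const (p := -(1 / 3 : ℝ)) (Or.inl h.ne')
  have e : (1 + x ^ 2) ^ (-(1 / 3 : ℝ) - 1) = tfphi x ^ 4 := by
    unfold tfphi
    rw [← Real.rpow_natCast _ 4, ← Real.rpow_mul h.le]
    norm_num
  rw [e] at h2
  have e2 : -(2 / 3) * x * tfphi x ^ 4 = 2 * x * -(1 / 3 : ℝ) * tfphi x ^ 4 := by ring
  rw [e2]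
  exact h2

lemma tfphi_cont : Continuous tfphi :=
  continuous_iff_continuousAt.2 fun x => (tfphi_deriv x).continuousAt

lemma tf_base (a : ℝ) : ∃ (κ κ1 κ2 κ3 : ℝ → ℝ) (C : ℝ), 0 < C ∧ (∀ x, HasDerivAt κ (κ1 x) x) ∧
    (∀ x, HasDerivAt κ1 (κ2 x) x) ∧ (∀ x, HasDerivAt κ2 (κ3 x) x) ∧ Continuous κ3 ∧
    (∀ x, 1 ≤ x ^ 2 + a - κ3 x) ∧ (∀ x, |κ3 x| ≤ C) ∧ (∀ x, tfphi x ≤ κ x) ∧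
    (∀ x, κ x ≤ tfphi x + C * tfphi x ^ 6) := by
  obtain ⟨α, hα1, hα2⟩ : ∃ α : ℝ, 1 ≤ α ∧ 15 - a ≤ α := ⟨max 1 (15 - a), le_max_left _ _, le_max_right _ _⟩
  obtain ⟨l, hl⟩ : ∃ l : ℝ, l = 16000 * α := ⟨_, rfl⟩
  have hl1 : 1 ≤ l := by linarith
  have hl0 : l ≠ 0 := by linarith
  set A : ℝ := 66 * α * l ^ 3 with hA
  set u : ℝ → ℝ := fun x => x / l + 3 / 2 with hu
  set g : ℝ → ℝ := fun x => 1 / (1 + u x ^ 2) with hg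
  have hu' : ∀ x, HasDerivAt u (1 / l) x := fun x => by
    exact ((hasDerivAt_id x).div_const l).add_const (3 / 2 : ℝ)
  have hgpos : ∀ x, 0 < g x := fun x => by simp only [hg]; positivity
  have hgu : ∀ x, g x * (1 + u x ^ 2) = 1 := fun x => by
    simp only [hg]; exact one_div_mul_cancel (by positivity)
  have hg1 : ∀ x, g x ≤ 1 := fun x => by nlinarith [hgu x, hgpos x, mul_nonneg (hgpos x).le (sq_nonneg (u x))]
  have hg' : ∀ x, HasDerivAt g (-2 * u x * g x ^ 2 / l) x := fun x => by
    have h1 : HasDerivAt (fun x : ℝ => 1 + u x ^ 2) (2 * u x * (1 / l)) x := by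
      simpa using ((hu' x).fun_pow 2).const_add 1
    have h2 := h1.fun_inv (by positivity)
    have e : g = fun x => (1 + u x ^ 2)⁻¹ := by funext x; simp [hg]
    have e2 : -2 * u x * g x ^ 2 / l = -(2 * u x * (1 / l)) / (1 + u x ^ 2) ^ 2 := by
      simp only [hg]; field_simp
    rw [e2, e]; exact h2
  have hugc : Continuous u := continuous_iff_continuousAt.2 fun x => (hu' x).continuousAt
  have hgc : Continuous g := continuous_iff_continuousAt.2 fun x => (hg' x).continuousAt
  have hφc := tfphi_cont
  set Q3 : ℝ → ℝ := fun x => A / l ^ 3 * (72 * u x * g x ^ 4 - 192 * u x ^ 3 * g x ^ 5) with hQ3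
  set P3 : ℝ → ℝ := fun x => 16 / 3 * x * tfphi x ^ 7 - 224 / 27 * x ^ 3 * tfphi x ^ 10 with hP3
  have hAl : A / l ^ 3 = 66 * α := by rw [hA]; field_simp
  have hug : ∀ x, |u x * g x| ≤ 1 / 2 := fun x => by
    have h1 := hgu x
    have h2 := hgpos x
    rw [abs_le]
    constructor <;> nlinarith [mul_nonneg h2.le (sq_nonneg (u x - 1)), mul_nonneg h2.le (sq_nonneg (u x + 1))]
  have hQform : ∀ x, Q3 x = 66 * α * (24 * (u x * g x) * g x ^ 4 * 3 - 120 * (u x * g x) ^ 3 * g x ^ 2) := by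
    intro x
    simp only [hQ3, hAl]
    have h1 := hgu x
    have h2 : u x * g x ^ 4 = u x * g x ^ 4 * (g x * (1 + u x ^ 2)) := by rw [h1, mul_one]
    linear_combination (66 * α * 72) * h2
  have hQbd : ∀ x, |Q3 x| ≤ 66 * α * 60 := by
    intro x
    rw [hQform, abs_mul, abs_of_pos (by linarith : 0 < 66 * α)]
    apply mul_le_mul_of_nonneg_left _ (by linarith)
    have h1 := hug x
    have h2 := hgpos x
    have h3 : |(u x * g x) * g x ^ 4| ≤ 1 / 2 := by
      rw [abs_mul]
      have : |g x ^ 4| ≤ 1 := by rw [abs_of_pos (by positivity)]; exact pow_le_one₀ h2.le (hg1 x)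
      nlinarith [abs_nonneg (u x * g x), abs_nonneg (g x ^ 4)]
    have h4 : |(u x * g x) ^ 3 * g x ^ 2| ≤ 1 / 8 := by
      rw [abs_mul, abs_pow]
      have : |g x ^ 2| ≤ 1 := by rw [abs_of_pos (by positivity)]; exact pow_le_one₀ h2.le (hg1 x)
      have h5 : |u x * g x| ^ 3 ≤ (1 / 2) ^ 3 := pow_le_pow_left₀ (abs_nonneg _) h1 3
      have h6 : 0 ≤ |u x * g x| ^ 3 := by positivity
      nlinarith [abs_nonneg (g x ^ 2)]
    have h3 := abs_le.1 h3
    have h4 := abs_le.1 h4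
    rw [abs_le]
    constructor <;> nlinarith [h3.1, h3.2, h4.1, h4.2]
  have hPbd : ∀ x, |P3 x| ≤ 14 := by
    intro x
    have h1 := tfphi_cube x
    have h2 := tfphi_pos x
    have h3 := tfphi_le_one x
    set p := tfphi x
    have hp3 : 0 < p ^ 3 := by positivity
    have e1 : |x * p ^ 3| ≤ 1 / 2 := by
      rw [abs_le]
      constructor <;> nlinarith [mul_nonneg hp3.le (sq_nonneg (x - 1)), mul_nonneg hp3.le (sq_nonneg (x + 1))]
    have e2 : |x ^ 2 * p ^ 3| ≤ 1 := by
      rw [abs_of_nonneg (by positivity)]; nlinarith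
    have e3 : |p ^ 4| ≤ 1 := by rw [abs_of_pos (by positivity)]; exact pow_le_one₀ h2.le h3
    have e4 : |x * p ^ 7| ≤ 1 := by
      have : x * p ^ 7 = (x * p ^ 3) * p ^ 4 := by ring
      rw [this, abs_mul]
      nlinarith [abs_nonneg (x * p ^ 3), abs_nonneg (p ^ 4)]
    have e5 : |x ^ 3 * p ^ 10| ≤ 1 := by
      have : x ^ 3 * p ^ 10 = (x * p ^ 7) * (x ^ 2 * p ^ 3) := by ring
      rw [this, abs_mul]
      nlinarith [abs_nonneg (x * p ^ 7), abs_nonneg (x ^ 2 * p ^ 3)]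
    have e4 := abs_le.1 e4
    have e5 := abs_le.1 e5
    rw [abs_le]
    constructor <;> simp only [hP3] <;> linarith [e4.1, e4.2, e5.1, e5.2]
  refine ⟨fun x => tfphi x + A * g x ^ 2,
    fun x => -(2 / 3) * x * tfphi x ^ 4 + A * (-4 * u x * g x ^ 3 / l),
    fun x => (-(2 / 3) * tfphi x ^ 4 + 16 / 9 * x ^ 2 * tfphi x ^ 7) +
      A / l ^ 2 * (-4 * g x ^ 3 + 24 * u x ^ 2 * g x ^ 4),
    fun x => P3 x + Q3 x, 14 + 66 * α * 60 + A * (6 * l ^ 2) ^ 2, by positivity, ?_, ?_, ?_, ?_, ?_, ?_, ?_, ?_⟩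
  · intro x
    have := (tfphi_deriv x).add (((hg' x).fun_pow 2).const_mul A)
    refine this.congr_deriv ?_
    push_cast
    ring
  · intro x
    have h1 := (((hasDerivAt_id x).const_mul (-(2 / 3 : ℝ))).mul ((tfphi_deriv x).fun_pow 4))
    have h2 := (((((hu' x).const_mul (-4 : ℝ)).mul ((hg' x).fun_pow 3)).div_const l).const_mul A)
    refine (h1.add h2).congr_deriv ?_
    simp only [id]
    push_cast
    field_simp
    ring
  · intro x
    have h1 := (((tfphi_deriv x).fun_pow 4).const_mul (-(2 / 3 : ℝ))).add
      ((((hasDerivAt_id x).fun_pow 2).const_mul (16 / 9 : ℝ)).mul ((tfphi_deriv x).fun_pow 7))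
    have h2 := ((((hg' x).fun_pow 3).const_mul (-4 : ℝ)).add
      ((((hu' x).fun_pow 2).const_mul (24 : ℝ)).mul ((hg' x).fun_pow 4))).const_mul (A / l ^ 2)
    refine (h1.add h2).congr_deriv ?_
    simp only [id, hP3, hQ3]
    push_cast
    field_simp
    ring
  · simp only [hP3, hQ3]; fun_prop
  · intro x
    have hP := (abs_le.1 (hPbd x)).2
    have hQ := (abs_le.1 (hQbd x)).2
    suffices h : Q3 x ≤ x ^ 2 - α by simp only; linarith
    rcases le_total (|x|) (l / 2) with hx | hx
    · have hx := abs_le.1 hx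
      have hux : 1 ≤ u x ∧ u x ≤ 2 := by
        have : (-(l / 2)) / l ≤ x / l := by gcongr; exact hx.1
        have h2 : x / l ≤ (l / 2) / l := by gcongr; exact hx.2
        have e1 : (-(l / 2)) / l = -(1 / 2) := by field_simp
        have e2 : (l / 2) / l = 1 / 2 := by field_simp
        rw [e1] at this; rw [e2] at h2
        simp only [hu]
        constructor <;> linarith
      have hgl : 1 / 5 ≤ g x := by
        have := hgu x
        have := hgpos x
        nlinarith [hux.1, hux.2]
      have hg5 : (1 / 5 : ℝ) ^ 5 ≤ g x ^ 5 := pow_le_pow_left₀ (by norm_num) hgl 5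
      have hQ' : Q3 x = - (66 * α * (24 * u x * (5 * u x ^ 2 - 3) * g x ^ 5)) := by
        rw [hQform]; ring
      have hm : 48 ≤ 24 * u x * (5 * u x ^ 2 - 3) := by nlinarith [hux.1]
      have : 1 ≤ 66 * (24 * u x * (5 * u x ^ 2 - 3) * g x ^ 5) := by nlinarith
      rw [hQ']
      nlinarith [sq_nonneg x]
    · have : (l / 2) ^ 2 ≤ x ^ 2 := by
        rw [← sq_abs x]; exact pow_le_pow_left₀ (by linarith) hx 2
      have : (l / 2) ^ 2 = 64000000 * α ^ 2 := by rw [hl]; ring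
      nlinarith
  · intro x
    have := abs_add_le (P3 x) (Q3 x)
    have h0 : 0 ≤ A * (6 * l ^ 2) ^ 2 := by positivity
    linarith [hPbd x, hQbd x]
  · intro x
    have : 0 ≤ A * g x ^ 2 := by positivity
    simp only; linarith
  · intro x
    have h1 := tfphi_cube x
    have h2 := hgu x
    have h3 : g x ≤ 6 * l ^ 2 * tfphi x ^ 3 := by
      have hx : x = l * (u x - 3 / 2) := by simp only [hu]; field_simp; ring
      have hxx : 1 + x ^ 2 ≤ 6 * l ^ 2 * (1 + u x ^ 2) := by
        have hll : 1 ≤ l ^ 2 := one_le_pow₀ hl1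
        have : x ^ 2 = l ^ 2 * (u x - 3 / 2) ^ 2 := by
          calc x ^ 2 = (l * (u x - 3 / 2)) ^ 2 := by rw [← hx]
            _ = _ := by ring
        nlinarith [sq_nonneg (u x + 3 / 2), mul_nonneg (by linarith : 0 ≤ l ^ 2) (sq_nonneg (u x + 3 / 2)), mul_nonneg (by linarith : 0 ≤ l ^ 2) (sq_nonneg (u x))]
      have hp : 0 < tfphi x ^ 3 := pow_pos (tfphi_pos x) 3
      have hm := mul_le_mul_of_nonneg_left hxx (mul_nonneg (hgpos x).le hp.le)
      calc g x = g x * tfphi x ^ 3 * (1 + x ^ 2) := by rw [mul_assoc, h1, mul_one]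
        _ ≤ _ := hm
        _ = 6 * l ^ 2 * tfphi x ^ 3 * (g x * (1 + u x ^ 2)) := by ring
        _ = _ := by rw [h2, mul_one]
    have h4 : g x ^ 2 ≤ (6 * l ^ 2 * tfphi x ^ 3) ^ 2 := pow_le_pow_left₀ (hgpos x).le h3 2
    have h5 : (6 * l ^ 2 * tfphi x ^ 3) ^ 2 = (6 * l ^ 2) ^ 2 * tfphi x ^ 6 := by ring
    have hA0 : 0 ≤ A := by positivity
    have h6 := mul_le_mul_of_nonneg_left h4 hA0
    rw [h5] at h6
    have h7 : 0 ≤ (14 + 66 * α * 60) * tfphi x ^ 6 := by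
      have := tfphi_pos x
      positivity
    have h8 : tfphi x + (14 + 66 * α * 60 + A * (6 * l ^ 2) ^ 2) * tfphi x ^ 6 =
      tfphi x + ((14 + 66 * α * 60) * tfphi x ^ 6 + A * ((6 * l ^ 2) ^ 2 * tfphi x ^ 6)) := by ring
    rw [h8]
    linarith

/-- truncated nonlinearity -/
noncomputable def tfG (ε y : ℝ) : ℝ := 1 / (max y ε) ^ 3

lemma tfG_pos {ε : ℝ} (hε : 0 < ε) (y : ℝ) : 0 < tfG ε y := by
  unfold tfG
  have : 0 < max y ε := lt_max_of_lt_right hε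
  positivity

lemma tfG_le {ε m : ℝ} (hm : 0 < m) {y : ℝ} (h : m ≤ max y ε) : tfG ε y ≤ 1 / m ^ 3 := by
  unfold tfG
  exact one_div_le_one_div_of_le (by positivity) (pow_le_pow_left₀ hm.le h 3)

lemma tfG_ge {ε m : ℝ} (hε : 0 < ε) (hm : ε ≤ m) {y : ℝ} (h : y ≤ m) : 1 / m ^ 3 ≤ tfG ε y := by
  unfold tfG
  have : 0 < max y ε := lt_max_of_lt_right hε
  exact one_div_le_one_div_of_le (by positivity) (pow_le_pow_left₀ this.le (max_le h hm) 3)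

lemma tfG_lip {ε : ℝ} (hε : 0 < ε) : LipschitzWith (Real.toNNReal (3 / ε ^ 4)) (tfG ε) := by
  apply LipschitzWith.of_dist_le_mul
  intro x y
  rw [Real.coe_toNNReal _ (by positivity), Real.dist_eq, Real.dist_eq]
  have h1 : |max x ε - max y ε| ≤ |x - y| := abs_max_sub_max_le_abs x y ε
  have hx : ε ≤ max x ε := le_max_right _ _
  have hy : ε ≤ max y ε := le_max_right _ _
  unfold tfG
  set X := max x ε
  set Y := max y ε
  have hX : 0 < X := lt_of_lt_of_le hε hx
  have hY : 0 < Y := lt_of_lt_of_le hε hy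
  have e : 1 / X ^ 3 - 1 / Y ^ 3 = (Y - X) * (1 / (X * Y ^ 3) + 1 / (X ^ 2 * Y ^ 2) + 1 / (X ^ 3 * Y)) := by
    field_simp
    ring
  rw [e, abs_mul, abs_sub_comm, mul_comm]
  have b1 : 1 / (X * Y ^ 3) ≤ 1 / (ε * ε ^ 3) := by gcongr
  have b2 : 1 / (X ^ 2 * Y ^ 2) ≤ 1 / (ε ^ 2 * ε ^ 2) := by gcongr
  have b3 : 1 / (X ^ 3 * Y) ≤ 1 / (ε ^ 3 * ε) := by gcongr
  have e2 : 3 / ε ^ 4 = 1 / (ε * ε ^ 3) + 1 / (ε ^ 2 * ε ^ 2) + 1 / (ε ^ 3 * ε) := by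
    field_simp; ring
  have : |1 / (X * Y ^ 3) + 1 / (X ^ 2 * Y ^ 2) + 1 / (X ^ 3 * Y)| ≤ 3 / ε ^ 4 := by
    rw [abs_of_pos (by positivity), e2]; linarith
  exact mul_le_mul this h1 (abs_nonneg _) (by positivity)

lemma tf_tail0 {y η τ : ℝ} (hη : 0 < η) (hη2 : η ≤ 1 / 2) (hτ : |τ| ≤ 1 / 4) :
    (min |y - 1| 1) ^ 2 / 4 - τ ^ 2 ≤ (y - 1) * (1 + τ - tfG η y) := by
  have main : (|y - 1| ≤ 1 → (y - 1) ^ 2 / 2 ≤ (y - 1) * (1 - tfG η y)) ∧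
      (1 ≤ |y - 1| → |y - 1| / 2 ≤ (y - 1) * (1 - tfG η y)) := by
    rcases le_total 1 y with hy | hy
    · have hG : tfG η y = 1 / y ^ 3 := by unfold tfG; rw [max_eq_left (by linarith)]
      have hF : (y - 1) ^ 2 / y ≤ (y - 1) * (1 - tfG η y) := by
        rw [hG]
        have : 1 / y ^ 3 ≤ 1 / y := by
          apply one_div_le_one_div_of_le (by linarith)
          exact le_self_pow₀ hy (by norm_num)
        have e : (y - 1) ^ 2 / y = (y - 1) * (1 - 1 / y) := by field_simp
        rw [e]
        apply mul_le_mul_of_nonneg_left _ (by linarith)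
        linarith
      rw [abs_of_nonneg (by linarith)]
      constructor
      · intro h
        refine le_trans ?_ hF
        rw [div_le_div_iff₀ (by norm_num) (by linarith)]
        nlinarith [sq_nonneg (y - 1)]
      · intro h
        refine le_trans ?_ hF
        rw [div_le_div_iff₀ (by norm_num) (by linarith)]
        nlinarith
    · rw [abs_of_nonpos (by linarith)]
      rcases le_total η y with h2 | h2
      · have hG : tfG η y = 1 / y ^ 3 := by unfold tfG; rw [max_eq_left h2]
        have hy0 : 0 < y := by linarith
        have : 1 + (1 - y) ≤ 1 / y ^ 3 := by
          rw [le_div_iff₀ (by positivity)]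
          have : y ^ 3 ≤ y := by nlinarith [mul_nonneg hy0.le (sub_nonneg.2 hy), mul_nonneg (mul_nonneg hy0.le hy0.le) (sub_nonneg.2 hy)]
          nlinarith [sq_nonneg (y - 1)]
        have hF : (y - 1) ^ 2 ≤ (y - 1) * (1 - tfG η y) := by rw [hG]; nlinarith
        constructor
        · intro h; nlinarith [sq_nonneg (y - 1)]
        · intro h; nlinarith
      · have hG : 8 ≤ tfG η y := by
          have := tfG_ge hη hη2 (h2.trans hη2)
          norm_num at this
          exact this
        have hF : 7 * (1 - y) ≤ (y - 1) * (1 - tfG η y) := by nlinarith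
        constructor
        · intro h; nlinarith [sq_nonneg (y - 1)]
        · intro h; nlinarith
  have hτ' := abs_le.1 hτ
  rcases le_total |y - 1| 1 with h | h
  · rw [min_eq_left h, sq_abs]
    have := main.1 h
    nlinarith [sq_nonneg ((y - 1) / 2 + τ)]
  · rw [min_eq_right h]
    have h1 := main.2 h
    have h2 : -(|y - 1| / 4) ≤ (y - 1) * τ := by
      have := abs_mul (y - 1) τ
      have h3 := neg_abs_le ((y - 1) * τ)
      rw [this] at h3
      nlinarith [abs_nonneg (y - 1)]
    nlinarith [sq_nonneg τ]

lemma tf_tail {κ K ε w : ℝ} (hκ : 0 < κ) (hε : 0 < ε) (hεκ : ε ≤ κ / 2)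
    (hτ : |κ ^ 3 * w - 1| ≤ 1 / 4) :
    (min (|K - κ| / κ) 1) ^ 2 / 4 - (κ ^ 3 * w - 1) ^ 2 ≤ κ ^ 2 * ((K - κ) * (w - tfG ε K)) := by
  have h := tf_tail0 (y := K / κ) (η := ε / κ) (τ := κ ^ 3 * w - 1) (by positivity)
    (by rw [div_le_iff₀ hκ]; linarith) hτ
  have e1 : K / κ - 1 = (K - κ) / κ := by field_simp
  have e2 : tfG (ε / κ) (K / κ) = κ ^ 3 * tfG ε K := by
    unfold tfG
    rw [max_div_div_right hκ.le]
    have : 0 < max K ε := lt_max_of_lt_right hε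
    field_simp
  rw [e1, e2, abs_div, abs_of_pos hκ] at h
  refine h.trans (le_of_eq ?_)
  field_simp
  ring

lemma tf_mid {κa κb wb : ℝ} (hκa : 0 < κa) (hκb : κa ≤ κb) (hwb : 1 ≤ wb) :
    ∃ c C l : ℝ, 0 < c ∧ 0 < C ∧ 0 < l ∧ ∀ κ w ε K : ℝ, κa ≤ κ → κ ≤ κb → 1 ≤ w → w ≤ wb →
      0 < ε → ε ≤ l → c * (|K - κ| + tfG ε K) - C ≤ (K - κ) * (w - tfG ε K) := by
  have hwb0 : 0 < wb := by linarith
  have hκb0 : 0 < κb := by linarith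
  obtain ⟨l, hl0, hl1, hl2⟩ : ∃ l : ℝ, 0 < l ∧ l ≤ κa / 2 ∧ 2 * wb * l ^ 3 ≤ 1 := by
    refine ⟨min (κa / 2) (1 / (2 * wb)), by positivity, min_le_left _ _, ?_⟩
    set l := min (κa / 2) (1 / (2 * wb))
    have h0 : 0 < l := by positivity
    have h1 : l ≤ 1 / (2 * wb) := min_le_right _ _
    have h2 : l * (2 * wb) ≤ 1 := by rwa [le_div_iff₀ (by positivity)] at h1
    have h3 : l ≤ 1 := by nlinarith
    have h4 : l ^ 3 ≤ l := by nlinarith [mul_nonneg h0.le (sub_nonneg.2 h3), mul_nonneg (mul_nonneg h0.le h0.le) (sub_nonneg.2 h3)]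
    nlinarith
  set g := 1 / l ^ 3 with hg
  have hg0 : 0 < g := by positivity
  have hg2 : 2 * wb ≤ g := by
    rw [hg, le_div_iff₀ (by positivity)]; exact hl2
  set c := min (1 / 2) (κa / 8) with hc
  have hc0 : 0 < c := by positivity
  have hc1 : c ≤ 1 / 2 := min_le_left _ _
  have hc2 : c ≤ κa / 8 := min_le_right _ _
  refine ⟨c, 1 + (κb + 2) * (wb + g) + (κb + 2 + g), l, hc0, by positivity, hl0, ?_⟩
  intro κ w ε K h1 h2 h3 h4 hε hεl
  have hGp := tfG_pos hε K
  have hbig : 0 ≤ (κb + 2) * (wb + g) + (κb + 2 + g) := by positivity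
  rcases le_total K l with hK | hK
  · have hG : g ≤ tfG ε K := tfG_ge hε hεl hK
    set G := tfG ε K
    have hk : κa / 2 ≤ κ - K := by linarith
    rw [abs_of_neg (by linarith)]
    have e1 : (κ - K) * (G / 2) ≤ (K - κ) * (w - G) := by
      have : (κ - K) * (G / 2) ≤ (κ - K) * (G - w) := by
        apply mul_le_mul_of_nonneg_left _ (by linarith)
        linarith
      linarith
    have e2 : (κ - K) * 2 ≤ (κ - K) * G := by
      apply mul_le_mul_of_nonneg_left _ (by linarith)
      linarith
    have e3 : (κa / 2) * G ≤ (κ - K) * G := by gcongr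
    have e4 : c * (κ - K) ≤ 1 / 2 * (κ - K) := by
      apply mul_le_mul_of_nonneg_right hc1 (by linarith)
    have e5 : c * G ≤ κa / 8 * G := mul_le_mul_of_nonneg_right hc2 hGp.le
    nlinarith
  · have hGle : tfG ε K ≤ g := tfG_le hl0 (hK.trans (le_max_left _ _))
    rcases le_total K (κ + 2) with hK2 | hK2
    · set G := tfG ε K
      have hk : |K - κ| ≤ κb + 2 := by
        rw [abs_le]; constructor <;> linarith
      have e1 : -((κb + 2) * (wb + g)) ≤ (K - κ) * (w - G) := by
        have h5 : |w - G| ≤ wb + g := by rw [abs_le]; constructor <;> linarith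
        have h6 : |(K - κ) * (w - G)| ≤ (κb + 2) * (wb + g) := by
          rw [abs_mul]; exact mul_le_mul hk h5 (abs_nonneg _) (by linarith)
        exact (abs_le.1 h6).1
      have e2 : c * (|K - κ| + G) ≤ 1 * (κb + 2 + g) := by
        apply mul_le_mul (by linarith) (by linarith) (by positivity) (by norm_num)
      linarith
    · have hG : tfG ε K ≤ 1 / 8 := by
        have : tfG ε K ≤ 1 / 2 ^ 3 := tfG_le (by norm_num) ((by linarith : (2:ℝ) ≤ K).trans (le_max_left _ _))
        norm_num at this ⊢
        exact this
      set G := tfG ε K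
      rw [abs_of_nonneg (by linarith)]
      have e1 : (K - κ) * (7 / 8) ≤ (K - κ) * (w - G) := by
        apply mul_le_mul_of_nonneg_left _ (by linarith)
        linarith
      have e2 : c * (K - κ + G) ≤ 1 / 2 * (K - κ + G) :=
        mul_le_mul_of_nonneg_right hc1 (by linarith)
      linarith

/-- the comparison profile -/
structure TFBase (a C : ℝ) (κ κ1 κ2 κ3 : ℝ → ℝ) : Prop where
  C0 : 0 < C
  d0 : ∀ x, HasDerivAt κ (κ1 x) x
  d1 : ∀ x, HasDerivAt κ1 (κ2 x) x
  d2 : ∀ x, HasDerivAt κ2 (κ3 x) x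
  c3 : Continuous κ3
  w1 : ∀ x, 1 ≤ x ^ 2 + a - κ3 x
  b3 : ∀ x, |κ3 x| ≤ C
  lo : ∀ x, tfphi x ≤ κ x
  hi : ∀ x, κ x ≤ tfphi x + C * tfphi x ^ 6

lemma TFBase.tau {a C : ℝ} {κ κ1 κ2 κ3 : ℝ → ℝ} (h : TFBase a C κ κ1 κ2 κ3) :
    ∃ C1 : ℝ, 1 ≤ C1 ∧ ∀ x, |κ x ^ 3 * (x ^ 2 + a - κ3 x) - 1| ≤ C1 * tfphi x ^ 3 ∧
      κ x ≤ C1 * tfphi x := by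
  have hC := h.C0
  set D := C + |a| + 1 with hD
  have hD0 : 0 ≤ D := by positivity
  refine ⟨(1 + C) ^ 3 * D + 3 * C * (1 + C) ^ 2 + (1 + C), ?_, ?_⟩
  · have : 0 ≤ (1 + C) ^ 3 * D + 3 * C * (1 + C) ^ 2 := by positivity
    linarith
  intro x
  have p0 := tfphi_pos x
  have p1 := tfphi_le_one x
  have p3 := tfphi_cube x
  have lo := h.lo x
  have hi := h.hi x
  set p := tfphi x
  have hk : κ x ≤ (1 + C) * p := by
    have : p ^ 6 ≤ p := pow_le_of_le_one p0.le p1 (by norm_num)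
    nlinarith
  set k := κ x
  have hk0 : 0 < k := lt_of_lt_of_le p0 lo
  constructor
  · set e := a - κ3 x - 1 with he
    have heD : |e| ≤ D := by
      have h1 := abs_le.1 (h.b3 x)
      have h2 := abs_le.1 (le_refl |a|)
      rw [abs_le]; constructor <;> linarith [h1.1, h1.2, h2.1, h2.2]
    have e1 : k ^ 3 * (x ^ 2 + a - κ3 x) - 1 = (k ^ 3 - p ^ 3) * (1 + x ^ 2) + k ^ 3 * e := by
      rw [he]; linear_combination p3
    have b1 : k ^ 3 ≤ (1 + C) ^ 3 * p ^ 3 := by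
      rw [← mul_pow]; exact pow_le_pow_left₀ hk0.le hk 3
    have b2 : |k ^ 3 * e| ≤ (1 + C) ^ 3 * p ^ 3 * D := by
      rw [abs_mul, abs_of_pos (by positivity)]
      exact mul_le_mul b1 heD (abs_nonneg _) (by positivity)
    have b3 : k ^ 3 - p ^ 3 ≤ 3 * C * (1 + C) ^ 2 * p ^ 6 := by
      have e2 : k ^ 3 - p ^ 3 = (k - p) * (k ^ 2 + k * p + p ^ 2) := by ring
      have q1 : k - p ≤ C * p ^ 6 := by linarith
      have hpk : p ≤ (1 + C) * p := by nlinarith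
      have q2 : k ^ 2 + k * p + p ^ 2 ≤ 3 * (1 + C) ^ 2 := by
        have r1 : k ≤ 1 + C := hk.trans (by nlinarith)
        have r2 : p ≤ 1 + C := by linarith
        nlinarith
      rw [e2]
      have : (k - p) * (k ^ 2 + k * p + p ^ 2) ≤ (C * p ^ 6) * (3 * (1 + C) ^ 2) :=
        mul_le_mul q1 q2 (by positivity) (by positivity)
      linarith
    have b4 : (k ^ 3 - p ^ 3) * (1 + x ^ 2) ≤ 3 * C * (1 + C) ^ 2 * p ^ 3 := by
      have := mul_le_mul_of_nonneg_right b3 (by positivity : 0 ≤ 1 + x ^ 2)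
      have e3 : 3 * C * (1 + C) ^ 2 * p ^ 6 * (1 + x ^ 2) = 3 * C * (1 + C) ^ 2 * p ^ 3 * (p ^ 3 * (1 + x ^ 2)) := by ring
      rw [e3, p3, mul_one] at this
      exact this
    have b5 : 0 ≤ (k ^ 3 - p ^ 3) * (1 + x ^ 2) := by
      have : p ^ 3 ≤ k ^ 3 := pow_le_pow_left₀ p0.le lo 3
      have := sub_nonneg.2 this
      positivity
    have b2 := abs_le.1 b2
    have b6 : 0 ≤ 3 * C * (1 + C) ^ 2 * p ^ 3 := by positivity
    have b7 : 0 ≤ (1 + C) * p ^ 3 := by positivity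
    rw [e1, abs_le]
    constructor <;> linarith [b2.1, b2.2]
  · have : 0 ≤ ((1 + C) ^ 3 * D + 3 * C * (1 + C) ^ 2) * p := by positivity
    linarith

lemma TFBase.local {a C : ℝ} {κ κ1 κ2 κ3 : ℝ → ℝ} (h : TFBase a C κ κ1 κ2 κ3) (R : ℝ) :
    ∃ c D l : ℝ, 0 < c ∧ 0 < D ∧ 0 < l ∧ ∀ x ε K : ℝ, |x| ≤ R → 0 < ε → ε ≤ l →
      c * (|K - κ x| + tfG ε K) - D ≤ (K - κ x) * (x ^ 2 + a - κ3 x - tfG ε K) := by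
  obtain ⟨C1, hC1, hτ⟩ := h.tau
  have hlow : ∀ x, |x| ≤ R → 1 / (1 + R ^ 2) ≤ tfphi x := by
    intro x hx
    have p0 := tfphi_pos x
    have p3 := tfphi_cube x
    have : tfphi x ^ 3 ≤ tfphi x := pow_le_of_le_one p0.le (tfphi_le_one x) (by norm_num)
    have hx2 : x ^ 2 ≤ R ^ 2 := by rw [← sq_abs x]; exact pow_le_pow_left₀ (abs_nonneg _) hx 2
    rw [div_le_iff₀ (by positivity)]
    nlinarith
  obtain ⟨c, D, l, hc, hD, hl, H⟩ := tf_mid (κa := 1 / (1 + R ^ 2)) (κb := C1)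
    (wb := 1 + R ^ 2 + |a| + C) (by positivity)
    (by rw [div_le_iff₀ (by positivity)]; nlinarith [sq_nonneg R])
    (by have := h.C0; nlinarith [sq_nonneg R, abs_nonneg a])
  refine ⟨c, D, l, hc, hD, hl, fun x ε K hx hε hεl => ?_⟩
  have hx2 : x ^ 2 ≤ R ^ 2 := by rw [← sq_abs x]; exact pow_le_pow_left₀ (abs_nonneg _) hx 2
  refine H (κ x) (x ^ 2 + a - κ3 x) ε K ((hlow x hx).trans (h.lo x)) ?_ (h.w1 x) ?_ hε hεl
  · have := (hτ x).2
    have := tfphi_le_one x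
    nlinarith
  · have h1 := abs_le.1 (h.b3 x)
    have h2 := le_abs_self a
    linarith [h1.1]

lemma TFBase.lower {a C : ℝ} {κ κ1 κ2 κ3 : ℝ → ℝ} (h : TFBase a C κ κ1 κ2 κ3) :
    ∃ C2 l : ℝ, 0 < C2 ∧ 0 < l ∧ ∀ x ε K : ℝ, 0 < ε → ε ≤ l → ε ≤ κ x / 2 →
      -(C2 * (1 / (1 + x ^ 2))) ≤ (K - κ x) * (x ^ 2 + a - κ3 x - tfG ε K) := by
  obtain ⟨C1, hC1, hτ⟩ := h.tau
  obtain ⟨c, D, l, hc, hD, hl, H⟩ := h.local (4 * C1)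
  refine ⟨C1 ^ 2 + D * (4 * C1), l, by positivity, hl, fun x ε K hε hεl hεκ => ?_⟩
  have p0 := tfphi_pos x
  have p1 := tfphi_le_one x
  have p3 := tfphi_cube x
  have hp : 1 / (1 + x ^ 2) = tfphi x ^ 3 := by
    rw [div_eq_iff (by positivity)]; exact p3.symm
  rw [hp]
  have hlo := h.lo x
  obtain ⟨hτ1, -⟩ := hτ x
  have hκ : 0 < κ x := lt_of_lt_of_le p0 hlo
  set p := tfphi x
  rcases le_total (C1 * p ^ 3) (1 / 4) with hs | hs
  · have := tf_tail (K := K) hκ hε hεκ (hτ1.trans hs)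
    set Φ := (K - κ x) * (x ^ 2 + a - κ3 x - tfG ε K)
    set τ := κ x ^ 3 * (x ^ 2 + a - κ3 x) - 1
    have hm : 0 ≤ (min (|K - κ x| / κ x) 1) ^ 2 / 4 := by positivity
    have hτ2 : τ ^ 2 ≤ (C1 * p ^ 3) ^ 2 := by
      rw [← sq_abs τ]; exact pow_le_pow_left₀ (abs_nonneg _) hτ1 2
    have h1 : -((C1 * p ^ 3) ^ 2) ≤ κ x ^ 2 * Φ := by linarith
    by_contra hc
    push Not at hc
    have hΦ : Φ < -(C1 ^ 2 * p ^ 3) := by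
      have : 0 ≤ D * (4 * C1) * p ^ 3 := by positivity
      linarith
    have h2 : p ^ 2 ≤ κ x ^ 2 := pow_le_pow_left₀ p0.le hlo 2
    have hΦ0 : Φ < 0 := hΦ.trans_le (by have : 0 ≤ C1 ^ 2 * p ^ 3 := by positivity
                                        linarith)
    have h3 : κ x ^ 2 * Φ ≤ p ^ 2 * Φ := mul_le_mul_of_nonpos_right h2 hΦ0.le
    have h4 : p ^ 2 * Φ < p ^ 2 * (-(C1 ^ 2 * p ^ 3)) := mul_lt_mul_of_pos_left hΦ (by positivity)
    have h5 : C1 ^ 2 * p ^ 5 * p ≤ C1 ^ 2 * p ^ 5 * 1 :=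
      mul_le_mul_of_nonneg_left p1 (by positivity)
    nlinarith
  · have hx : |x| ≤ 4 * C1 := by
      have : 1 + x ^ 2 ≤ 4 * C1 := by nlinarith [sq_nonneg x]
      rw [← sq_abs] at this
      nlinarith [sq_nonneg (|x| - 1)]
    have := H x ε K hx hε hεl
    have h1 : 0 ≤ c * (|K - κ x| + tfG ε K) := by
      have := tfG_pos hε K
      positivity
    have h2 : D * 1 ≤ D * (4 * (C1 * p ^ 3)) := mul_le_mul_of_nonneg_left (by linarith) hD.le
    have h3 : 0 ≤ C1 ^ 2 * p ^ 3 := by positivity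
    linarith

lemma tf_S {f f1 f2 : ℝ → ℝ} {T C : ℝ} (hC : 0 ≤ C) (hT : 0 ≤ T)
    (h : ∀ t ∈ Icc 0 T, HasDerivAt f (f1 t) t) (h1 : ∀ t ∈ Icc 0 T, HasDerivAt f1 (f2 t) t)
    (hE : ∀ t ∈ Icc 0 T, -C ≤ f t * f2 t - f1 t ^ 2 / 2)
    (h0 : 0 < f 0) (h10 : 0 ≤ f1 0) (hm : 4 * C * T ^ 2 ≤ f 0 ^ 2) :
    ∀ t ∈ Icc 0 T, f 0 / 4 ≤ f t := by
  intro t ht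
  by_contra hcon
  push Not at hcon
  have hcont : ContinuousOn f (Icc 0 T) := fun x hx => (h x hx).continuousAt.continuousWithinAt
  set S := Icc 0 T ∩ f ⁻¹' (Iic (f 0 / 4)) with hS
  have hSc : IsClosed S := hcont.preimage_isClosed_of_isClosed isClosed_Icc isClosed_Iic
  have hSk : IsCompact S := isCompact_Icc.of_isClosed_subset hSc inter_subset_left
  obtain ⟨x1, hx1, hmin⟩ := hSk.exists_isLeast ⟨t, ht, hcon.le⟩
  have hx1T := hx1.1
  have hx1f : f x1 ≤ f 0 / 4 := hx1.2
  have hpos : ∀ x ∈ Icc 0 x1, f 0 / 4 ≤ f x := by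
    intro x hx
    by_contra hc
    push Not at hc
    have hxT : x ∈ Icc 0 T := ⟨hx.1, hx.2.trans hx1T.2⟩
    have hx' : x1 ≤ x := hmin ⟨hxT, hc.le⟩
    have hxx : x = x1 := le_antisymm hx.2 hx'
    -- then f x1 < f0/4, use IVT on [0,x1]
    have hI : f 0 / 4 ∈ f '' (Icc 0 x1) := by
      apply intermediate_value_Icc' hx1T.1 (hcont.mono (Icc_subset_Icc_right hx1T.2))
      exact ⟨hx1f, by linarith⟩
    obtain ⟨y, hy, hy2⟩ := hI
    have : x1 ≤ y := hmin ⟨⟨hy.1, hy.2.trans hx1T.2⟩, hy2.le⟩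
    have : y = x1 := le_antisymm hy.2 this
    rw [this] at hy2
    rw [hxx] at hc
    linarith
  have hsub : ∀ x ∈ Icc 0 x1, x ∈ Icc 0 T := fun x hx => ⟨hx.1, hx.2.trans hx1T.2⟩
  have key := tf_taylor2 (f := f) (f1 := f1) (f2 := f2) (c := -(4 * C / f 0)) hx1T.1
    (fun x hx => h x (hsub x hx)) (fun x hx => h1 x (hsub x hx)) (by
      intro x hx
      have e := hE x (hsub x hx)
      have p := hpos x hx
      rw [← neg_div, div_le_iff₀ h0]
      by_contra hc
      push Not at hc
      have hneg : f2 x < 0 := by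
        by_contra h3
        push Not at h3
        nlinarith
      nlinarith [sq_nonneg (f1 x)])
  have hx12 : x1 ^ 2 ≤ T ^ 2 := pow_le_pow_left₀ hx1T.1 hx1T.2 2
  have h3 : 4 * C / f 0 * (x1 - 0) ^ 2 ≤ f 0 := by
    rw [div_mul_eq_mul_div, div_le_iff₀ h0]
    nlinarith
  have h4 : 0 ≤ f1 0 * (x1 - 0) := by have := hx1T.1; nlinarith
  linarith

lemma tf_push {k k1 k2 Φ : ℝ → ℝ} {I : Set ℝ} {C c T x0 m : ℝ}
    (h : ∀ x ∈ I, HasDerivAt k (k1 x) x) (h1 : ∀ x ∈ I, HasDerivAt k1 (k2 x) x)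
    (hE : ∀ x ∈ I, HasDerivAt (fun x => k x * k2 x - k1 x ^ 2 / 2) (Φ x) x)
    (hC0 : 0 ≤ C)
    (hC : ∀ x ∈ I, |k x * k2 x - k1 x ^ 2 / 2| ≤ C) (hT : 0 ≤ T)
    (hI : ∀ x, |x - x0| ≤ T → x ∈ I) (hm : 0 < m) (hmk : m ≤ |k x0|)
    (hmT : 4 * C * T ^ 2 ≤ m ^ 2)
    (hΦ : ∀ x, |x - x0| ≤ T → m / 4 ≤ |k x| → c ≤ Φ x) : c * T ≤ 2 * C := by
  obtain ⟨σ, hσ, hσ2⟩ : ∃ σ : ℝ, (σ = 1 ∨ σ = -1) ∧ σ * k x0 = |k x0| := by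
    rcases le_total 0 (k x0) with h0 | h0
    · exact ⟨1, Or.inl rfl, by rw [abs_of_nonneg h0]; ring⟩
    · exact ⟨-1, Or.inr rfl, by rw [abs_of_nonpos h0]; ring⟩
  obtain ⟨ρ, hρ, hρ2⟩ : ∃ ρ : ℝ, (ρ = 1 ∨ ρ = -1) ∧ 0 ≤ σ * ρ * k1 x0 := by
    rcases le_total 0 (σ * k1 x0) with h0 | h0
    · exact ⟨1, Or.inl rfl, by linarith⟩
    · exact ⟨-1, Or.inr rfl, by linarith⟩
  have hσσ : σ * σ = 1 := by rcases hσ with h | h <;> rw [h] <;> norm_num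
  have hρρ : ρ * ρ = 1 := by rcases hρ with h | h <;> rw [h] <;> norm_num
  have hσa : |σ| = 1 := by rcases hσ with h | h <;> rw [h] <;> norm_num
  have hρa : |ρ| = 1 := by rcases hρ with h | h <;> rw [h] <;> norm_num
  have hin : ∀ t ∈ Icc 0 T, |x0 + ρ * t - x0| ≤ T := by
    intro t ht
    rw [add_sub_cancel_left, abs_mul, hρa, one_mul, abs_of_nonneg ht.1]
    exact ht.2
  have hcomp : ∀ (g : ℝ → ℝ) (g' t : ℝ), HasDerivAt g g' (x0 + ρ * t) →
      HasDerivAt (fun t => g (x0 + ρ * t)) (ρ * g') t := by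
    intro g g' t hg
    have h2 : HasDerivAt (fun t => x0 + ρ * t) ρ t := by
      simpa using ((hasDerivAt_id t).const_mul ρ).const_add x0
    have := hg.comp t h2
    refine this.congr_deriv ?_
    ring
  have S := tf_S (f := fun t => σ * k (x0 + ρ * t)) (f1 := fun t => σ * (ρ * k1 (x0 + ρ * t)))
    (f2 := fun t => σ * (ρ * (ρ * k2 (x0 + ρ * t)))) (T := T) (C := C) hC0 hT
    (fun t ht => (hcomp k _ t (h _ (hI _ (hin t ht)))).const_mul σ)
    (fun t ht => ((hcomp k1 _ t (h1 _ (hI _ (hin t ht)))).const_mul ρ).const_mul σ)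
    (fun t ht => by
      have := (abs_le.1 (hC _ (hI _ (hin t ht)))).1
      have e : σ * k (x0 + ρ * t) * (σ * (ρ * (ρ * k2 (x0 + ρ * t)))) - (σ * (ρ * k1 (x0 + ρ * t))) ^ 2 / 2
        = (σ * σ) * (ρ * ρ) * (k (x0 + ρ * t) * k2 (x0 + ρ * t) - k1 (x0 + ρ * t) ^ 2 / 2) := by ring
      rw [e, hσσ, hρρ]
      linarith)
    (by simp only [mul_zero, add_zero]; rw [hσ2]; linarith)
    (by simp only [mul_zero, add_zero]; linarith)
    (by simp only [mul_zero, add_zero]; rw [hσ2]; nlinarith)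
  simp only [mul_zero, add_zero] at S
  rw [hσ2] at S
  have key := tf_taylor1 (f := fun t => ρ * (k (x0 + ρ * t) * k2 (x0 + ρ * t) - k1 (x0 + ρ * t) ^ 2 / 2))
    (f1 := fun t => Φ (x0 + ρ * t)) (c := c) hT
    (fun t ht => by
      have := (hcomp _ _ t (hE _ (hI _ (hin t ht)))).const_mul ρ
      refine this.congr_deriv ?_
      rw [← mul_assoc, hρρ, one_mul])
    (fun t ht => by
      apply hΦ _ (hin t ht)
      have s1 := S t ht
      have s2 : σ * k (x0 + ρ * t) ≤ |k (x0 + ρ * t)| := by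
        refine (le_abs_self _).trans (le_of_eq ?_)
        rw [abs_mul, hσa, one_mul]
      linarith)
  have b0 := abs_le.1 (hC _ (hI _ (hin 0 ⟨le_refl _, hT⟩)))
  have b1 := abs_le.1 (hC _ (hI _ (hin T ⟨hT, le_refl _⟩)))
  rcases hρ with h | h <;> rw [h] at key b0 b1 <;> linarith [b0.1, b0.2, b1.1, b1.2]

/-- approximate solutions -/
structure TFApp (a C0 : ℝ) (κ κ1 κ2 κ3 : ℝ → ℝ) (N ε : ℝ) (K K1 K2 : ℝ → ℝ) : Prop where
  e0 : 0 < ε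
  ek : ∀ x ∈ Icc (-N) N, ε ≤ κ x / 2
  d0 : ∀ x ∈ Icc (-N) N, HasDerivAt K (K1 x) x
  d1 : ∀ x ∈ Icc (-N) N, HasDerivAt K1 (K2 x) x
  d2 : ∀ x ∈ Icc (-N) N, HasDerivAt K2 (x ^ 2 + a - tfG ε (K x)) x
  en : ∀ x ∈ Icc (-N) N, |(K x - κ x) * (K2 x - κ2 x) - (K1 x - κ1 x) ^ 2 / 2| ≤ C0

lemma tf_Ederiv {a C ε x : ℝ} {κ κ1 κ2 κ3 K K1 K2 : ℝ → ℝ} (h : TFBase a C κ κ1 κ2 κ3)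
    (d0 : HasDerivAt K (K1 x) x) (d1 : HasDerivAt K1 (K2 x) x)
    (d2 : HasDerivAt K2 (x ^ 2 + a - tfG ε (K x)) x) :
    HasDerivAt (fun x => (K x - κ x) * (K2 x - κ2 x) - (K1 x - κ1 x) ^ 2 / 2)
      ((K x - κ x) * (x ^ 2 + a - κ3 x - tfG ε (K x))) x := by
  have q0 := d0.sub (h.d0 x)
  have q1 := d1.sub (h.d1 x)
  have q2 := d2.sub (h.d2 x)
  have := (q0.mul q2).sub ((q1.fun_pow 2).div_const 2)
  refine this.congr_deriv ?_
  simp only [Pi.sub_apply]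
  push_cast
  ring

lemma TFBase.exists_app {a C : ℝ} {κ κ1 κ2 κ3 : ℝ → ℝ} (h : TFBase a C κ κ1 κ2 κ3) :
    ∃ C0 : ℝ, 0 < C0 ∧ ∃ (ε : ℕ → ℝ) (K K1 K2 : ℕ → ℝ → ℝ), Tendsto ε atTop (nhds 0) ∧
      ∀ n : ℕ, TFApp a C0 κ κ1 κ2 κ3 (n + 1) (ε n) (K n) (K1 n) (K2 n) := by
  obtain ⟨C2, l, hC2, hl, low⟩ := h.lower
  refine ⟨C2 * Real.pi, by positivity, ?_⟩
  set ε : ℕ → ℝ := fun n => min l (1 / (2 * (1 + ((n : ℝ) + 1) ^ 2))) with hεd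
  have hε0 : ∀ n, 0 < ε n := fun n => by positivity
  have hlim : Tendsto ε atTop (nhds 0) := by
    refine tendsto_of_tendsto_of_tendsto_of_le_of_le tendsto_const_nhds
      tendsto_one_div_add_atTop_nhds_zero_nat (fun n => (hε0 n).le) (fun n => ?_)
    refine (min_le_right _ _).trans ?_
    apply one_div_le_one_div_of_le (by positivity)
    have : (0 : ℝ) ≤ n := Nat.cast_nonneg n
    nlinarith
  suffices H : ∀ n : ℕ, ∃ K K1 K2 : ℝ → ℝ, TFApp a (C2 * Real.pi) κ κ1 κ2 κ3 (n + 1) (ε n) K K1 K2 by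
    choose K K1 K2 hK using H
    exact ⟨ε, K, K1, K2, hlim, hK⟩
  intro n
  set N : ℝ := (n : ℝ) + 1 with hN
  have hN0 : 0 < N := by positivity
  have hek : ∀ x ∈ Icc (-N) N, ε n ≤ κ x / 2 := by
    intro x hx
    refine (min_le_right _ _).trans ?_
    have p0 := tfphi_pos x
    have p3 := tfphi_cube x
    have p4 : tfphi x ^ 3 ≤ tfphi x := pow_le_of_le_one p0.le (tfphi_le_one x) (by norm_num)
    have lo := h.lo x
    have hx2 : x ^ 2 ≤ N ^ 2 := sq_le_sq' hx.1 hx.2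
    rw [div_le_iff₀ (by positivity)]
    nlinarith
  obtain ⟨K, K1, K2, hd, i0, i1, i2⟩ := tf_shoot (fun t y => t ^ 2 + a - tfG (ε n) y) (-N) N (by linarith)
    (fun y => by fun_prop) (Real.toNNReal (3 / (ε n) ^ 4))
    (fun t => by
      apply LipschitzWith.of_dist_le_mul
      intro x y
      have := (tfG_lip (hε0 n)).dist_le_mul x y
      rw [Real.dist_eq] at this ⊢
      rw [abs_sub_comm] at this
      convert this using 2
      ring)
    ((N + 1) ^ 2 + |a| + 1 / (ε n) ^ 3)
    (fun t ht y => by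
      have g0 := tfG_pos (hε0 n) y
      have g1 := tfG_le (hε0 n) (le_max_right y (ε n))
      have t2 : t ^ 2 ≤ (N + 1) ^ 2 := sq_le_sq' (by linarith [ht.1]) ht.2
      have a1 := neg_abs_le a
      have a2 := le_abs_self a
      have a3 := abs_nonneg a
      have t3 := sq_nonneg t
      have t4 := sq_nonneg (N + 1)
      have t5 : 0 < 1 / (ε n) ^ 3 := by have := hε0 n; positivity
      rw [abs_le]
      constructor <;> linarith)
    (κ (-N)) (κ1 (-N)) (κ N)
  have hEd : ∀ x ∈ Icc (-N) N, HasDerivAt (fun x => ((K x - κ x) * (K2 x - κ2 x) - (K1 x - κ1 x) ^ 2 / 2) + C2 * Real.arctan x)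
      ((K x - κ x) * (x ^ 2 + a - κ3 x - tfG (ε n) (K x)) + C2 * (1 / (1 + x ^ 2))) x := by
    intro x hx
    obtain ⟨d0, d1, d2⟩ := hd x hx
    exact (tf_Ederiv h d0 d1 d2).add ((Real.hasDerivAt_arctan x).const_mul C2)
  have hnn : ∀ x ∈ Icc (-N) N, 0 ≤ (K x - κ x) * (x ^ 2 + a - κ3 x - tfG (ε n) (K x)) + C2 * (1 / (1 + x ^ 2)) := by
    intro x hx
    have := low x (ε n) (K x) (hε0 n) (min_le_left _ _) (hek x hx)
    linarith
  refine ⟨K, K1, K2, hε0 n, hek, fun x hx => (hd x hx).1, fun x hx => (hd x hx).2.1,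
    fun x hx => (hd x hx).2.2, ?_⟩
  intro x hx
  have m1 := tf_mono hx.1 (fun y hy => hEd y ⟨hy.1, hy.2.trans hx.2⟩)
    (fun y hy => hnn y ⟨hy.1, hy.2.trans hx.2⟩)
  have m2 := tf_mono hx.2 (fun y hy => hEd y ⟨hx.1.trans hy.1, hy.2⟩)
    (fun y hy => hnn y ⟨hx.1.trans hy.1, hy.2⟩)
  rw [i0, i1] at m1
  rw [i2] at m2
  have r1 := Real.arctan_lt_pi_div_two x
  have r2 := Real.neg_pi_div_two_lt_arctan x
  have r3 := Real.arctan_lt_pi_div_two N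
  have r4 := Real.neg_pi_div_two_lt_arctan (-N)
  have s1 : C2 * (Real.arctan x - Real.arctan (-N)) ≤ C2 * Real.pi :=
    mul_le_mul_of_nonneg_left (by linarith) hC2.le
  have s2 : C2 * (Real.arctan N - Real.arctan x) ≤ C2 * Real.pi :=
    mul_le_mul_of_nonneg_left (by linarith) hC2.le
  have s3 := sq_nonneg (K1 N - κ1 N)
  rw [abs_le]
  constructor <;> nlinarith

lemma tfphi_near {x x0 : ℝ} (h : |x - x0| ≤ 1) : tfphi x ≤ 2 * tfphi x0 := by
  have p0 := tfphi_pos x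
  have q0 := tfphi_pos x0
  have p3 := tfphi_cube x
  have q3 := tfphi_cube x0
  have hh := abs_le.1 h
  have hsq : (x - x0) ^ 2 ≤ 1 := by nlinarith [hh.1, hh.2]
  have h1 : 1 + x0 ^ 2 ≤ 3 * (1 + x ^ 2) := by nlinarith [sq_nonneg (x0 - 2 * x), sq_nonneg x]
  have h2 : tfphi x ^ 3 ≤ (2 * tfphi x0) ^ 3 := by
    have e1 : tfphi x ^ 3 * (1 + x0 ^ 2) ≤ 3 := by
      have : tfphi x ^ 3 * (1 + x0 ^ 2) ≤ tfphi x ^ 3 * (3 * (1 + x ^ 2)) :=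
        mul_le_mul_of_nonneg_left h1 (by positivity)
      linarith
    have e2 : tfphi x ^ 3 * (1 + x0 ^ 2) * tfphi x0 ^ 3 ≤ 3 * tfphi x0 ^ 3 :=
      mul_le_mul_of_nonneg_right e1 (by positivity)
    have e3 : tfphi x ^ 3 * (1 + x0 ^ 2) * tfphi x0 ^ 3 = tfphi x ^ 3 := by
      linear_combination tfphi x ^ 3 * q3
    have : 0 < tfphi x0 ^ 3 := by positivity
    rw [mul_pow]; linarith
  exact le_of_pow_le_pow_left₀ (by norm_num) (by positivity) h2

lemma tfphi_small {q : ℝ} (hq : 0 < q) : ∃ X : ℝ, 0 < X ∧ ∀ x, X ≤ |x| → tfphi x < q := by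
  refine ⟨1 / q ^ 3, by positivity, fun x hx => ?_⟩
  have p0 := tfphi_pos x
  have p3 := tfphi_cube x
  by_contra hc
  push Not at hc
  have h1 : q ^ 3 ≤ tfphi x ^ 3 := pow_le_pow_left₀ hq.le hc 3
  rw [div_le_iff₀ (by positivity)] at hx
  have h2 : |x| < 1 + x ^ 2 := by
    rw [← sq_abs]; nlinarith [sq_nonneg (|x| - 1)]
  have h3 : |x| * q ^ 3 < (1 + x ^ 2) * tfphi x ^ 3 := by
    have : |x| * q ^ 3 ≤ |x| * tfphi x ^ 3 := mul_le_mul_of_nonneg_left h1 (abs_nonneg _)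
    have : |x| * tfphi x ^ 3 < (1 + x ^ 2) * tfphi x ^ 3 := mul_lt_mul_of_pos_right h2 (by positivity)
    linarith
  linarith

set_option maxHeartbeats 2000000 in
lemma TFBase.tail {a C C0 : ℝ} {κ κ1 κ2 κ3 : ℝ → ℝ} (h : TFBase a C κ κ1 κ2 κ3) (hC0 : 0 < C0)
    {δ : ℝ} (hδ : 0 < δ) (hδ1 : δ ≤ 1) :
    ∃ X : ℝ, 0 < X ∧ ∀ (N ε : ℝ) (K K1 K2 : ℝ → ℝ), TFApp a C0 κ κ1 κ2 κ3 N ε K K1 K2 →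
      ∀ x, X ≤ |x| → |x| + 1 ≤ N → |K x - κ x| ≤ δ * κ x := by
  obtain ⟨C1, hC1, hτ⟩ := h.tau
  set η := δ / (8 * C1) with hη
  have hη0 : 0 < η := by positivity
  have hη1 : η ≤ 1 := by rw [hη, div_le_iff₀ (by positivity)]; linarith
  obtain ⟨q, hq0, hq1, hq2⟩ : ∃ q : ℝ, 0 < q ∧ 8 * C1 * q ≤ η / 4 ∧
      128 * C1 ^ 2 * (C0 + 1) ^ 2 * q ≤ η ^ 2 * δ := by
    refine ⟨min (η / (32 * C1)) (η ^ 2 * δ / (128 * C1 ^ 2 * (C0 + 1) ^ 2)), by positivity, ?_, ?_⟩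
    · have := min_le_left (η / (32 * C1)) (η ^ 2 * δ / (128 * C1 ^ 2 * (C0 + 1) ^ 2))
      rw [le_div_iff₀ (by positivity)] at this
      linarith
    · have := min_le_right (η / (32 * C1)) (η ^ 2 * δ / (128 * C1 ^ 2 * (C0 + 1) ^ 2))
      rw [le_div_iff₀ (by positivity)] at this
      linarith
  obtain ⟨X, hX0, hX⟩ := tfphi_small hq0
  refine ⟨X, hX0, ?_⟩
  intro N ε K K1 K2 A x0 hx0 hxN
  by_contra hcon
  push Not at hcon
  have hpq := hX x0 hx0
  have p0 := tfphi_pos x0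
  have p1 := tfphi_le_one x0
  have plo := h.lo x0
  have hnear : ∀ x, |x - x0| ≤ 1 → tfphi x ≤ 2 * tfphi x0 := fun x hx => tfphi_near hx
  set p := tfphi x0
  set T := δ * p / (2 * (C0 + 1)) with hT
  have hT0 : 0 < T := by positivity
  have hT1 : T ≤ 1 := by
    rw [hT, div_le_iff₀ (by positivity)]
    have : δ * p ≤ 1 := mul_le_one₀ hδ1 p0.le p1
    linarith
  have hI : ∀ x, |x - x0| ≤ T → x ∈ Icc (-N) N := by
    intro x hx
    have h1 := abs_le.1 (hx.trans hT1)
    have h2 := abs_le.1 (le_refl |x0|)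
    constructor <;> linarith [h1.1, h1.2, h2.1, h2.2]
  have key := tf_push (k := fun x => K x - κ x) (k1 := fun x => K1 x - κ1 x)
    (k2 := fun x => K2 x - κ2 x)
    (Φ := fun x => (K x - κ x) * (x ^ 2 + a - κ3 x - tfG ε (K x))) (I := Icc (-N) N) (C := C0)
    (c := η ^ 2 / (32 * C1 ^ 2 * p ^ 2)) (T := T) (x0 := x0) (m := δ * p)
    (fun x hx => (A.d0 x hx).sub (h.d0 x)) (fun x hx => (A.d1 x hx).sub (h.d1 x))
    (fun x hx => tf_Ederiv h (A.d0 x hx) (A.d1 x hx) (A.d2 x hx)) hC0.le A.en hT0.le hI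
    (by positivity) ((mul_le_mul_of_nonneg_left plo hδ.le).trans hcon.le)
    (by
      have e : 2 * (C0 + 1) * T = δ * p := by rw [hT]; field_simp
      rw [← e]
      have : 4 * C0 ≤ (2 * (C0 + 1)) ^ 2 := by
        have := sq_nonneg C0
        linarith [this]
      rw [mul_pow]
      exact mul_le_mul_of_nonneg_right this (by positivity))
    (fun x hx hk => by
      have px0 := tfphi_pos x
      have pn := hnear x (hx.trans hT1)
      have lo := h.lo x
      obtain ⟨t1, t2⟩ := hτ x
      have hκ : 0 < κ x := lt_of_lt_of_le px0 lo
      have hκ2 : κ x ≤ 2 * C1 * p := by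
        have : C1 * tfphi x ≤ C1 * (2 * p) := mul_le_mul_of_nonneg_left pn (by linarith)
        linarith
      have hφ3 : tfphi x ^ 3 ≤ 8 * p := by
        have b1 : tfphi x ^ 3 ≤ (2 * p) ^ 3 := pow_le_pow_left₀ px0.le pn 3
        have b2 : p ^ 3 ≤ p := pow_le_of_le_one p0.le p1 (by norm_num)
        rw [mul_pow] at b1; linarith
      have ht : |κ x ^ 3 * (x ^ 2 + a - κ3 x) - 1| ≤ η / 4 := by
        have b1 : C1 * tfphi x ^ 3 ≤ C1 * (8 * p) := mul_le_mul_of_nonneg_left hφ3 (by linarith)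
        have b2 : C1 * p ≤ C1 * q := mul_le_mul_of_nonneg_left hpq.le (by linarith)
        linarith
      have tl := tf_tail (K := K x) hκ A.e0 (A.ek x (hI x hx)) (ht.trans (by linarith))
      have hmin : η ≤ min (|K x - κ x| / κ x) 1 := by
        apply le_min _ hη1
        rw [le_div_iff₀ hκ]
        have : η * κ x ≤ η * (2 * C1 * p) := mul_le_mul_of_nonneg_left hκ2 hη0.le
        have e : η * (2 * C1 * p) = δ * p / 4 := by rw [hη]; field_simp; ring
        linarith
      have hm2 : η ^ 2 ≤ (min (|K x - κ x| / κ x) 1) ^ 2 := pow_le_pow_left₀ hη0.le hmin 2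
      have ht2 : (κ x ^ 3 * (x ^ 2 + a - κ3 x) - 1) ^ 2 ≤ (η / 4) ^ 2 := by
        rw [← sq_abs]; exact pow_le_pow_left₀ (abs_nonneg _) ht 2
      set Φ := (K x - κ x) * (x ^ 2 + a - κ3 x - tfG ε (K x)) with hΦ
      have hb : η ^ 2 / 8 ≤ κ x ^ 2 * Φ := by
        have : 0 ≤ η ^ 2 := by positivity
        linarith
      have hΦ0 : 0 < Φ := by
        by_contra hc
        push Not at hc
        have : κ x ^ 2 * Φ ≤ 0 := mul_nonpos_of_nonneg_of_nonpos (by positivity) hc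
        have : 0 < η ^ 2 := by positivity
        linarith
      rw [div_le_iff₀ (by positivity)]
      have b3 : κ x ^ 2 ≤ (2 * C1 * p) ^ 2 := pow_le_pow_left₀ hκ.le hκ2 2
      have b4 : κ x ^ 2 * Φ ≤ (2 * C1 * p) ^ 2 * Φ := mul_le_mul_of_nonneg_right b3 hΦ0.le
      have e5 : (2 * C1 * p) ^ 2 * Φ = 4 * (Φ * (C1 ^ 2 * p ^ 2)) := by ring
      linarith)
  have e : η ^ 2 / (32 * C1 ^ 2 * p ^ 2) * T = η ^ 2 * δ / (64 * C1 ^ 2 * (C0 + 1) * p) := by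
    rw [hT]; field_simp; norm_num
  rw [e, div_le_iff₀ (by positivity)] at key
  have f1 : 128 * C1 ^ 2 * (C0 + 1) ^ 2 * p < 128 * C1 ^ 2 * (C0 + 1) ^ 2 * q :=
    mul_lt_mul_of_pos_left hpq (by positivity)
  have f2 : 0 < C1 ^ 2 * (C0 + 1) * p := by positivity
  have f3 : 128 * C1 ^ 2 * (C0 + 1) ^ 2 * p = 2 * C0 * (64 * C1 ^ 2 * (C0 + 1) * p)
      + 128 * (C1 ^ 2 * (C0 + 1) * p) := by ring
  linarith

lemma TFBase.upper {a C C0 : ℝ} {κ κ1 κ2 κ3 : ℝ → ℝ} (h : TFBase a C κ κ1 κ2 κ3) (hC0 : 0 < C0)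
    (R : ℝ) :
    ∃ M l : ℝ, 0 < M ∧ 0 < l ∧ ∀ (N ε : ℝ) (K K1 K2 : ℝ → ℝ), TFApp a C0 κ κ1 κ2 κ3 N ε K K1 K2 →
      ε ≤ l → R + 1 ≤ N → ∀ x, |x| ≤ R → |K x - κ x| ≤ M := by
  obtain ⟨c, D, l, hc, hD, hl, H⟩ := h.local (R + 1)
  set m := 2 * (C0 + 1) + 4 * (D + 2 * C0 + 1) / c with hm
  have hm0 : 0 < m := by positivity
  refine ⟨m, l, hm0, hl, ?_⟩
  intro N ε K K1 K2 A hε hN x0 hx0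
  by_contra hcon
  push Not at hcon
  have hx0' := abs_le.1 hx0
  have hI : ∀ x, |x - x0| ≤ 1 → x ∈ Icc (-N) N := by
    intro x hx
    have h1 := abs_le.1 hx
    constructor <;> linarith [h1.1, h1.2]
  have hcm : 4 * (D + 2 * C0 + 1) ≤ c * m := by
    have : c * m = c * (2 * (C0 + 1)) + 4 * (D + 2 * C0 + 1) := by rw [hm]; field_simp
    have : 0 ≤ c * (2 * (C0 + 1)) := by positivity
    linarith
  have hm2 : 2 * (C0 + 1) ≤ m := by
    have : 0 ≤ 4 * (D + 2 * C0 + 1) / c := by positivity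
    linarith
  have key := tf_push (k := fun x => K x - κ x) (k1 := fun x => K1 x - κ1 x)
    (k2 := fun x => K2 x - κ2 x)
    (Φ := fun x => (K x - κ x) * (x ^ 2 + a - κ3 x - tfG ε (K x))) (I := Icc (-N) N) (C := C0)
    (c := 2 * C0 + 1) (T := 1) (x0 := x0) (m := m)
    (fun x hx => (A.d0 x hx).sub (h.d0 x)) (fun x hx => (A.d1 x hx).sub (h.d1 x))
    (fun x hx => tf_Ederiv h (A.d0 x hx) (A.d1 x hx) (A.d2 x hx)) hC0.le A.en zero_le_one hI
    hm0 hcon.le (by nlinarith)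
    (fun x hx hk => by
      have h1 := abs_le.1 hx
      have h2 := H x ε (K x) (abs_le.2 ⟨by linarith [h1.1], by linarith [h1.2]⟩) A.e0 hε
      have h3 := tfG_pos A.e0 (K x)
      have h4 : c * (m / 4) ≤ c * (|K x - κ x| + tfG ε (K x)) :=
        mul_le_mul_of_nonneg_left (by linarith) hc.le
      linarith)
  linarith

set_option maxHeartbeats 2000000 in
lemma TFBase.below {a C C0 : ℝ} {κ κ1 κ2 κ3 : ℝ → ℝ} (h : TFBase a C κ κ1 κ2 κ3) (hC0 : 0 < C0)
    (R : ℝ) :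
    ∃ μ l N0 : ℝ, 0 < μ ∧ 0 < l ∧ ∀ (N ε : ℝ) (K K1 K2 : ℝ → ℝ), TFApp a C0 κ κ1 κ2 κ3 N ε K K1 K2 →
      ε ≤ l → N0 ≤ N → ∀ x, |x| ≤ R → μ ≤ K x := by
  obtain ⟨X0, hX0, htail⟩ := h.tail hC0 (δ := 1 / 2) (by norm_num) (by norm_num)
  set X := max R X0 with hXd
  have hRX : R ≤ X := le_max_left _ _
  have hX0X : X0 ≤ X := le_max_right _ _
  have hX : 0 < X := lt_of_lt_of_le hX0 hX0X
  obtain ⟨c, D, l, hc, hD, hl, H⟩ := h.local (X + 1)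
  set κa := 1 / (1 + X ^ 2) with hκa
  have hκa0 : 0 < κa := by positivity
  have hlow : ∀ x, |x| ≤ X → κa ≤ κ x := by
    intro x hx
    refine le_trans ?_ (h.lo x)
    have p0 := tfphi_pos x
    have p3 := tfphi_cube x
    have : tfphi x ^ 3 ≤ tfphi x := pow_le_of_le_one p0.le (tfphi_le_one x) (by norm_num)
    have hx2 : x ^ 2 ≤ X ^ 2 := by rw [← sq_abs x]; exact pow_le_pow_left₀ (abs_nonneg _) hx 2
    rw [hκa, div_le_iff₀ (by positivity)]
    nlinarith
  have c1 : Continuous κ1 := continuous_iff_continuousAt.2 fun x => (h.d1 x).continuousAt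
  have c2 : Continuous κ2 := continuous_iff_continuousAt.2 fun x => (h.d2 x).continuousAt
  obtain ⟨b1, hb1⟩ := (isCompact_Icc (a := -X) (b := X)).exists_bound_of_continuousOn c1.continuousOn
  obtain ⟨b2, hb2⟩ := (isCompact_Icc (a := -X) (b := X)).exists_bound_of_continuousOn c2.continuousOn
  set B2 := |b2| + 2 * (C0 + b1 ^ 2 / 2) / κa with hB2
  have hB20 : 0 ≤ B2 := by positivity
  set B3 := (X + 1) ^ 2 + |a| with hB3
  have hB30 : 0 ≤ B3 := by positivity
  set B5 := 1 + (B2 + B3) with hB5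
  have hB50 : 0 < B5 := by positivity
  obtain ⟨s, hs0, hs1, hs2, hs3⟩ : ∃ s : ℝ, 0 < s ∧ s ≤ 1 ∧ s ≤ κa / 2 ∧
      s * (B5 ^ 3 * (2 * C0 + D + 1)) ≤ c := by
    refine ⟨min 1 (min (κa / 2) (c / (B5 ^ 3 * (2 * C0 + D + 1)))), by positivity, min_le_left _ _,
      (min_le_right _ _).trans (min_le_left _ _), ?_⟩
    rw [← le_div_iff₀ (by positivity)]
    exact (min_le_right _ _).trans (min_le_right _ _)
  have hss : s ^ 2 ≤ s := pow_le_of_le_one hs0.le hs1 (by norm_num)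
  refine ⟨s ^ 2, min l (B5 * s ^ 2), X + 1, by positivity, by positivity, ?_⟩
  intro N ε K K1 K2 A hε hN x hx
  by_contra hcon
  push Not at hcon
  have hεl := hε.trans (min_le_left _ _)
  have hεs := hε.trans (min_le_right _ _)
  have hXN : ∀ y ∈ Icc (-X) (X + 1), y ∈ Icc (-N) N := fun y hy =>
    ⟨by linarith [hy.1], by linarith [hy.2]⟩
  have hcK : ContinuousOn K (Icc (-X) X) := fun y hy =>
    (A.d0 y (hXN y ⟨hy.1, by linarith [hy.2]⟩)).continuousAt.continuousWithinAt
  have hx' := abs_le.1 hx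
  have hxX : x ∈ Icc (-X) X := ⟨by linarith [hx'.1], by linarith [hx'.2]⟩
  obtain ⟨x0, hx0, hmin⟩ := isCompact_Icc.exists_isMinOn ⟨x, hxX⟩ hcK
  have hK0 : K x0 < s ^ 2 := (hmin hxX).trans_lt hcon
  have hend : ∀ y, |y| = X → κa / 2 ≤ K y := by
    intro y hy
    have h1 := htail N ε K K1 K2 A y (by rw [hy]; exact hX0X) (by rw [hy]; exact hN)
    have h2 := hlow y hy.le
    have := (abs_le.1 h1).1
    linarith
  have hne1 : x0 ≠ -X := by
    intro he
    have := hend x0 (by rw [he, abs_neg, abs_of_pos hX])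
    linarith
  have hne2 : x0 ≠ X := by
    intro he
    have := hend x0 (by rw [he, abs_of_pos hX])
    linarith
  have hlt1 : -X < x0 := lt_of_le_of_ne hx0.1 (Ne.symm hne1)
  have hlt2 : x0 < X := lt_of_le_of_ne hx0.2 hne2
  have hx0N := hXN x0 ⟨hx0.1, by linarith⟩
  have hK1 : K1 x0 = 0 :=
    (hmin.isLocalMin (Icc_mem_nhds hlt1 hlt2)).hasDerivAt_eq_zero (A.d0 x0 hx0N)
  have hκ0 := hlow x0 (abs_le.2 ⟨hx0.1, hx0.2⟩)
  have hk : K x0 - κ x0 ≤ -(κa / 2) := by linarith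
  have hK2 : |K2 x0| ≤ B2 := by
    have hen := A.en x0 hx0N
    rw [hK1] at hen
    have g1 := hb1 x0 hx0
    have g2 := hb2 x0 hx0
    rw [Real.norm_eq_abs] at g1 g2
    have g3 : (0 - κ1 x0) ^ 2 ≤ b1 ^ 2 := by
      rw [zero_sub, neg_sq, ← sq_abs]; exact pow_le_pow_left₀ (abs_nonneg _) g1 2
    have g4 : |(K x0 - κ x0) * (K2 x0 - κ2 x0)| ≤ C0 + b1 ^ 2 / 2 := by
      have := abs_le.1 hen
      have := sq_nonneg (0 - κ1 x0)
      rw [abs_le]; constructor <;> linarith [this]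
    rw [abs_mul] at g4
    have g5 : κa / 2 ≤ |K x0 - κ x0| := by rw [abs_of_neg (by linarith)]; linarith
    have g6 : κa / 2 * |K2 x0 - κ2 x0| ≤ C0 + b1 ^ 2 / 2 :=
      (mul_le_mul_of_nonneg_right g5 (abs_nonneg _)).trans g4
    have g7 : |K2 x0 - κ2 x0| ≤ 2 * (C0 + b1 ^ 2 / 2) / κa := by
      rw [le_div_iff₀ hκa0]; linarith
    have g8 : |K2 x0| ≤ |K2 x0 - κ2 x0| + |κ2 x0| := by
      have := abs_add_le (K2 x0 - κ2 x0) (κ2 x0)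
      rwa [sub_add_cancel] at this
    have := le_abs_self b2
    linarith
  have hsmall : ∀ y ∈ Icc x0 (x0 + s), K y ≤ B5 * s ^ 2 := by
    intro y hy
    have hsub : ∀ z ∈ Icc x0 y, z ∈ Icc (-X) (X + 1) := fun z hz =>
      ⟨by linarith [hz.1], by linarith [hz.2, hy.2]⟩
    have t3 := tf_taylor3 (f := fun x => - K x) (f1 := fun x => - K1 x) (f2 := fun x => - K2 x)
      (f3 := fun x => - (x ^ 2 + a - tfG ε (K x))) (c := -B3) hy.1
      (fun z hz => (A.d0 z (hXN z (hsub z hz))).neg) (fun z hz => (A.d1 z (hXN z (hsub z hz))).neg)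
      (fun z hz => (A.d2 z (hXN z (hsub z hz))).neg)
      (fun z hz => by
        have := hsub z hz
        have z2 : z ^ 2 ≤ (X + 1) ^ 2 := sq_le_sq' (by linarith [this.1]) this.2
        have := tfG_pos A.e0 (K z)
        have := le_abs_self a
        linarith)
    rw [hK1] at t3
    set t := y - x0 with ht
    have ht0 : 0 ≤ t := by linarith [hy.1]
    have hts : t ≤ s := by linarith [hy.2]
    have t2 : t ^ 2 ≤ s ^ 2 := pow_le_pow_left₀ ht0 hts 2
    have t33 : t ^ 3 ≤ s ^ 2 := by
      have : t ^ 3 = t ^ 2 * t := by ring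
      have : t ^ 2 * t ≤ s ^ 2 * 1 := mul_le_mul t2 (by linarith) ht0 (by positivity)
      linarith
    have u1 : K2 x0 * t ^ 2 ≤ B2 * s ^ 2 := by
      have : K2 x0 * t ^ 2 ≤ B2 * t ^ 2 :=
        mul_le_mul_of_nonneg_right ((le_abs_self _).trans hK2) (by positivity)
      have : B2 * t ^ 2 ≤ B2 * s ^ 2 := mul_le_mul_of_nonneg_left t2 hB20
      linarith
    have u2 : B3 * t ^ 3 ≤ B3 * s ^ 2 := mul_le_mul_of_nonneg_left t33 hB30
    have u3 : 0 ≤ B2 * s ^ 2 := by positivity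
    have u4 : 0 ≤ B3 * s ^ 2 := by positivity
    have u5 : B5 * s ^ 2 = s ^ 2 + B2 * s ^ 2 + B3 * s ^ 2 := by rw [hB5]; ring
    linarith
  have hsub : ∀ z ∈ Icc x0 (x0 + s), z ∈ Icc (-X) (X + 1) := fun z hz =>
      ⟨by linarith [hz.1], by linarith [hz.2]⟩
  have key := tf_taylor1 (f := fun x => (K x - κ x) * (K2 x - κ2 x) - (K1 x - κ1 x) ^ 2 / 2)
    (f1 := fun x => (K x - κ x) * (x ^ 2 + a - κ3 x - tfG ε (K x)))
    (c := c * (1 / (B5 * s ^ 2) ^ 3) - D) (by linarith : x0 ≤ x0 + s)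
    (fun z hz => tf_Ederiv h (A.d0 z (hXN z (hsub z hz))) (A.d1 z (hXN z (hsub z hz)))
      (A.d2 z (hXN z (hsub z hz))))
    (fun z hz => by
      have hz' := hsub z hz
      have h1 := H z ε (K z) (abs_le.2 ⟨by linarith [hz'.1], hz'.2⟩) A.e0 hεl
      have h2 := tfG_ge A.e0 hεs (hsmall z hz)
      have h3 : c * (1 / (B5 * s ^ 2) ^ 3) ≤ c * (|K z - κ z| + tfG ε (K z)) :=
        mul_le_mul_of_nonneg_left (by have := abs_nonneg (K z - κ z); linarith) hc.le
      linarith)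
  have n0 := abs_le.1 (A.en x0 hx0N)
  have n1 := abs_le.1 (A.en (x0 + s) (hXN _ (hsub _ ⟨by linarith, le_refl _⟩)))
  rw [add_sub_cancel_left] at key
  have f1 : (c * (1 / (B5 * s ^ 2) ^ 3) - D) * s ≤ 2 * C0 := by linarith [n0.1, n1.2]
  have f2 : c * (1 / (B5 * s ^ 2) ^ 3) * s = c / (B5 ^ 3 * s ^ 5) := by field_simp
  have f3 : c / (B5 ^ 3 * s ^ 5) ≤ 2 * C0 + D := by
    have : D * s ≤ D * 1 := mul_le_mul_of_nonneg_left hs1 hD.le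
    linarith
  rw [div_le_iff₀ (by positivity)] at f3
  have f4 : s ^ 5 ≤ s := pow_le_of_le_one hs0.le hs1 (by norm_num)
  have f5 : (2 * C0 + D) * (B5 ^ 3 * s ^ 5) ≤ (2 * C0 + D) * (B5 ^ 3 * s) := by gcongr
  have f6 : 0 < B5 ^ 3 * s := by positivity
  have f7 : s * (B5 ^ 3 * (2 * C0 + D + 1)) = (2 * C0 + D) * (B5 ^ 3 * s) + B5 ^ 3 * s := by ring
  linarith

lemma tf_hasDeriv_lim {U : Filter ℕ} [U.NeBot] {f f1 : ℕ → ℝ → ℝ} {g g1 : ℝ → ℝ} {R B : ℝ}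
    (hf : ∀ x, Tendsto (fun n => f n x) U (nhds (g x)))
    (hf1 : ∀ x, Tendsto (fun n => f1 n x) U (nhds (g1 x)))
    (hB : ∀ᶠ n in U, ∀ x ∈ Icc (-R) R, ∀ y ∈ Icc (-R) R,
      |f n y - (f n x + f1 n x * (y - x))| ≤ B * (y - x) ^ 2 / 2)
    {x : ℝ} (hx1 : -R < x) (hx2 : x < R) : HasDerivAt g (g1 x) x := by
  have key : ∀ y ∈ Icc (-R) R, |g y - (g x + g1 x * (y - x))| ≤ B * (y - x) ^ 2 / 2 := by
    intro y hy
    have ht : Tendsto (fun n => |f n y - (f n x + f1 n x * (y - x))|) U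
        (nhds |g y - (g x + g1 x * (y - x))|) :=
      ((hf y).sub ((hf x).add ((hf1 x).mul_const _))).abs
    refine le_of_tendsto ht ?_
    filter_upwards [hB] with n hn
    exact hn x ⟨hx1.le, hx2.le⟩ y hy
  rw [hasDerivAt_iff_isLittleO]
  refine Asymptotics.IsBigO.trans_isLittleO (g := fun y => ‖y - x‖ ^ 2) ?_
    (Asymptotics.isLittleO_pow_sub_sub x (by norm_num))
  refine Asymptotics.IsBigO.of_bound (B / 2) ?_
  filter_upwards [Icc_mem_nhds hx1 hx2] with y hy
  have := key y hy
  rw [Real.norm_eq_abs, Real.norm_eq_abs, Real.norm_eq_abs, sq_abs, abs_of_nonneg (sq_nonneg (y - x)), smul_eq_mul]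
  have e : g y - g x - (y - x) * g1 x = g y - (g x + g1 x * (y - x)) := by ring
  rw [e]
  linarith

lemma tf_ultra {u : ℕ → ℝ} {A : ℝ} (h : ∀ᶠ n in atTop, |u n| ≤ A) :
    ∃ y, Tendsto u (hyperfilter ℕ : Filter ℕ) (nhds y) := by
  have h2 : ∀ᶠ n in (hyperfilter ℕ : Filter ℕ), |u n| ≤ A := Nat.hyperfilter_le_atTop h
  obtain ⟨y, -, hy⟩ := (isCompact_Icc (a := -A) (b := A)).ultrafilter_le_nhds ((hyperfilter ℕ).map u)
    (by
      rw [le_principal_iff]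
      show ∀ᶠ n in (hyperfilter ℕ : Filter ℕ), u n ∈ Icc (-A) A
      filter_upwards [h2] with n hn
      exact abs_le.1 hn)
  exact ⟨y, hy⟩

lemma TFBase.bounds {a C C0 : ℝ} {κ κ1 κ2 κ3 : ℝ → ℝ} (h : TFBase a C κ κ1 κ2 κ3) (hC0 : 0 < C0)
    {ε : ℕ → ℝ} {K K1 K2 : ℕ → ℝ → ℝ} (hε : Tendsto ε atTop (nhds 0))
    (hA : ∀ n : ℕ, TFApp a C0 κ κ1 κ2 κ3 (n + 1) (ε n) (K n) (K1 n) (K2 n)) (R : ℝ) :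
    ∃ μ A : ℝ, 0 < μ ∧ ∀ᶠ n in atTop, ∀ x ∈ Icc (-R) R, μ ≤ K n x ∧ |K n x| ≤ A ∧ |K1 n x| ≤ A ∧
      |K2 n x| ≤ A ∧ HasDerivAt (K n) (K1 n x) x ∧ HasDerivAt (K1 n) (K2 n x) x ∧
      HasDerivAt (K2 n) (x ^ 2 + a - 1 / (K n x) ^ 3) x := by
  obtain ⟨M, l1, hM, hl1, hup⟩ := h.upper hC0 (R + 1)
  obtain ⟨μ, l2, N0, hμ, hl2, hbe⟩ := h.below hC0 (R + 1)
  obtain ⟨C1, hC1, hτ⟩ := h.tau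
  set A := M + C1 with hAd
  set B := (R + 1) ^ 2 + |a| + 1 / μ ^ 3 with hB
  have hB0 : 0 ≤ B := by positivity
  have hA0 : 0 ≤ A := by linarith
  refine ⟨μ, 4 * A + B, hμ, ?_⟩
  have ev1 : ∀ᶠ n in atTop, ε n < min l1 (min l2 μ) := hε.eventually (gt_mem_nhds (by positivity))
  have ev2 : ∀ᶠ n : ℕ in atTop, max (R + 2) N0 ≤ (n : ℝ) :=
    tendsto_natCast_atTop_atTop.eventually_ge_atTop _
  filter_upwards [ev1, ev2] with n hn1 hn2
  have a1 : ε n ≤ l1 := hn1.le.trans (min_le_left _ _)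
  have a2 : ε n ≤ l2 := hn1.le.trans ((min_le_right _ _).trans (min_le_left _ _))
  have a3 : ε n ≤ μ := hn1.le.trans ((min_le_right _ _).trans (min_le_right _ _))
  have a4 : R + 2 ≤ n := (le_max_left _ _).trans hn2
  have a5 : N0 ≤ n := (le_max_right _ _).trans hn2
  have U : ∀ x, |x| ≤ R + 1 → |K n x| ≤ A ∧ μ ≤ K n x := by
    intro x hx
    have h1 := hup _ _ _ _ _ (hA n) a1 (by linarith) x hx
    have h2 := hbe _ _ _ _ _ (hA n) a2 (by linarith) x hx
    have h3 := (hτ x).2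
    have h4 := tfphi_le_one x
    have h5 := tfphi_pos x
    have h6 : κ x ≤ C1 := h3.trans (by nlinarith)
    have h7 := abs_le.1 h1
    refine ⟨abs_le.2 ⟨?_, ?_⟩, h2⟩ <;> linarith [h7.1, h7.2]
  have V : ∀ x, |x| ≤ R + 1 → tfG (ε n) (K n x) = 1 / (K n x) ^ 3 := by
    intro x hx
    unfold tfG
    rw [max_eq_left (a3.trans (U x hx).2)]
  have W : ∀ x, |x| ≤ R + 1 → x ∈ Icc (-((n : ℝ) + 1)) (n + 1) := by
    intro x hx
    have := abs_le.1 hx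
    exact ⟨by linarith [this.1], by linarith [this.2]⟩
  have D3 : ∀ x, |x| ≤ R + 1 → |x ^ 2 + a - 1 / (K n x) ^ 3| ≤ B := by
    intro x hx
    obtain ⟨-, u2⟩ := U x hx
    have hK : 0 < K n x := by linarith
    have b1 : 1 / (K n x) ^ 3 ≤ 1 / μ ^ 3 :=
      one_div_le_one_div_of_le (by positivity) (pow_le_pow_left₀ hμ.le u2 3)
    have b2 : 0 < 1 / (K n x) ^ 3 := by positivity
    have b3 : x ^ 2 ≤ (R + 1) ^ 2 := by rw [← sq_abs]; exact pow_le_pow_left₀ (abs_nonneg _) hx 2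
    have b4 := abs_le.1 (le_refl |a|)
    have b5 := sq_nonneg x
    have b6 := sq_nonneg (R + 1)
    rw [abs_le]; constructor <;> linarith [b4.1, b4.2]
  intro x hx
  have hx' : |x| ≤ R + 1 := abs_le.2 ⟨by linarith [hx.1], by linarith [hx.2]⟩
  have hy : ∀ y ∈ Icc (x - 1) (x + 1), |y| ≤ R + 1 := fun y hy =>
    abs_le.2 ⟨by linarith [hx.1, hy.1], by linarith [hx.2, hy.2]⟩
  have E2 : ∀ y, |y| ≤ R + 1 → HasDerivAt (K2 n) (y ^ 2 + a - 1 / (K n y) ^ 3) y := by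
    intro y hy
    rw [← V y hy]
    exact (hA n).d2 y (W y hy)
  obtain ⟨i1, i2⟩ := tf_interp (f := K n) (f1 := K1 n) (f2 := K2 n)
    (f3 := fun y => y ^ 2 + a - 1 / (K n y) ^ 3) (x := x) (A := A) (B := B)
    (fun y h => (hA n).d0 y (W y (hy y h))) (fun y h => (hA n).d1 y (W y (hy y h)))
    (fun y h => E2 y (hy y h)) (fun y h => (U y (hy y h)).1) (fun y h => D3 y (hy y h))
  have u := U x hx'
  exact ⟨u.2, by linarith [u.1], by linarith, i2, (hA n).d0 x (W x hx'), (hA n).d1 x (W x hx'), E2 x hx'⟩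

lemma TFBase.exists_sol {a C : ℝ} {κ κ1 κ2 κ3 : ℝ → ℝ} (h : TFBase a C κ κ1 κ2 κ3) :
    ∃ K K1 K2 : ℝ → ℝ, (∀ x, 0 < K x) ∧ (∀ x, HasDerivAt K (K1 x) x) ∧
      (∀ x, HasDerivAt K1 (K2 x) x) ∧ (∀ x, HasDerivAt K2 (x ^ 2 + a - 1 / (K x) ^ 3) x) ∧
      ∀ δ : ℝ, 0 < δ → δ ≤ 1 → ∃ X : ℝ, ∀ x, X ≤ |x| → |K x - κ x| ≤ δ * κ x := by
  obtain ⟨C0, hC0, ε, K, K1, K2, hε, hA⟩ := h.exists_app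
  have bd := h.bounds hC0 hε hA
  have hle : (hyperfilter ℕ : Filter ℕ) ≤ atTop := Nat.hyperfilter_le_atTop
  have L0 : ∀ x, ∃ y, Tendsto (fun n => K n x) (hyperfilter ℕ : Filter ℕ) (nhds y) := by
    intro x
    obtain ⟨μ, A, -, ev⟩ := bd |x|
    refine tf_ultra (A := A) ?_
    filter_upwards [ev] with n hn
    exact (hn x (abs_le.1 le_rfl)).2.1
  have L1 : ∀ x, ∃ y, Tendsto (fun n => K1 n x) (hyperfilter ℕ : Filter ℕ) (nhds y) := by
    intro x
    obtain ⟨μ, A, -, ev⟩ := bd |x|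
    refine tf_ultra (A := A) ?_
    filter_upwards [ev] with n hn
    exact (hn x (abs_le.1 le_rfl)).2.2.1
  have L2 : ∀ x, ∃ y, Tendsto (fun n => K2 n x) (hyperfilter ℕ : Filter ℕ) (nhds y) := by
    intro x
    obtain ⟨μ, A, -, ev⟩ := bd |x|
    refine tf_ultra (A := A) ?_
    filter_upwards [ev] with n hn
    exact (hn x (abs_le.1 le_rfl)).2.2.2.1
  choose k hk using L0
  choose k1 hk1 using L1
  choose k2 hk2 using L2
  have kpos : ∀ x, 0 < k x := by
    intro x
    obtain ⟨μ, A, hμ, ev⟩ := bd |x|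
    refine lt_of_lt_of_le hμ (ge_of_tendsto (hk x) (hle ?_))
    filter_upwards [ev] with n hn
    exact (hn x (abs_le.1 le_rfl)).1
  have hk3 : ∀ x, Tendsto (fun n => x ^ 2 + a - 1 / (K n x) ^ 3) (hyperfilter ℕ : Filter ℕ)
      (nhds (x ^ 2 + a - 1 / (k x) ^ 3)) := by
    intro x
    have := kpos x
    exact tendsto_const_nhds.sub (tendsto_const_nhds.div ((hk x).pow 3) (by positivity))
  refine ⟨k, k1, k2, kpos, ?_, ?_, ?_, ?_⟩
  · intro x
    obtain ⟨μ, A, hμ, ev⟩ := bd (|x| + 1)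
    have hx := abs_le.1 (le_refl |x|)
    refine tf_hasDeriv_lim (R := |x| + 1) (B := A) hk hk1 (hle ?_) (by linarith [hx.1]) (by linarith [hx.2])
    filter_upwards [ev] with n hn y hy z hz
    exact tf_taylor2_sym (fun x hx => (hn x hx).2.2.2.2.1) (fun x hx => (hn x hx).2.2.2.2.2.1)
      (fun x hx => (hn x hx).2.2.2.1) hy hz
  · intro x
    obtain ⟨μ, A, hμ, ev⟩ := bd (|x| + 1)
    have hx := abs_le.1 (le_refl |x|)
    refine tf_hasDeriv_lim (R := |x| + 1) (B := (|x| + 1) ^ 2 + |a| + 1 / μ ^ 3) hk1 hk2 (hle ?_)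
      (by linarith [hx.1]) (by linarith [hx.2])
    filter_upwards [ev] with n hn y hy z hz
    refine tf_taylor2_sym (f2 := fun x => x ^ 2 + a - 1 / (K n x) ^ 3)
      (fun x hx => (hn x hx).2.2.2.2.2.1) (fun x hx => (hn x hx).2.2.2.2.2.2) ?_ hy hz
    intro w hw
    have u2 := (hn w hw).1
    have hK : 0 < K n w := by linarith
    have b1 : 1 / (K n w) ^ 3 ≤ 1 / μ ^ 3 :=
      one_div_le_one_div_of_le (by positivity) (pow_le_pow_left₀ hμ.le u2 3)
    have b2 : 0 < 1 / (K n w) ^ 3 := by positivity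
    have b3 : w ^ 2 ≤ (|x| + 1) ^ 2 := sq_le_sq' hw.1 hw.2
    have b4 := abs_le.1 (le_refl |a|)
    have b5 := sq_nonneg w
    have b6 := sq_nonneg (|x| + 1)
    rw [abs_le]; constructor <;> linarith [b4.1, b4.2]
  · intro x
    obtain ⟨μ, A, hμ, ev⟩ := bd (|x| + 1)
    have hx := abs_le.1 (le_refl |x|)
    refine tf_hasDeriv_lim (R := |x| + 1) (B := 2 * (|x| + 1) + 3 * A / μ ^ 4)
      (f1 := fun n x => x ^ 2 + a - 1 / (K n x) ^ 3)
      (g1 := fun x => x ^ 2 + a - 1 / (k x) ^ 3) hk2 hk3 (hle ?_)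
      (by linarith [hx.1]) (by linarith [hx.2])
    filter_upwards [ev] with n hn y hy z hz
    refine tf_taylor2_sym (f1 := fun x => x ^ 2 + a - 1 / (K n x) ^ 3)
      (f2 := fun x => 2 * x + 3 * K1 n x / (K n x) ^ 4)
      (fun x hx => (hn x hx).2.2.2.2.2.2) ?_ ?_ hy hz
    · intro w hw
      have u2 := (hn w hw).1
      have hK : 0 < K n w := by linarith
      have d := (hn w hw).2.2.2.2.1
      have d1 : HasDerivAt (fun x : ℝ => x ^ 2 + a) (2 * w) w := by
        simpa using ((hasDerivAt_id w).fun_pow 2).add_const a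
      have d2 := (d.fun_pow 3).fun_inv (by positivity)
      have d3 := d1.sub d2
      have e : (fun x => x ^ 2 + a - 1 / (K n x) ^ 3) = (fun x => x ^ 2 + a) - (fun x => ((K n x) ^ 3)⁻¹) := by
        funext x; simp
      rw [e]
      refine d3.congr_deriv ?_
      push_cast
      field_simp
      ring
    · intro w hw
      have u2 := (hn w hw).1
      have u3 := (hn w hw).2.2.1
      have hK : 0 < K n w := by linarith
      have hA0 : 0 ≤ A := (abs_nonneg _).trans u3
      have c1 : |2 * w| ≤ 2 * (|x| + 1) := by
        rw [abs_mul, abs_two]; have := abs_le.2 hw; linarith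
      have c2 : |3 * K1 n w / (K n w) ^ 4| ≤ 3 * A / μ ^ 4 := by
        rw [abs_div, abs_mul, abs_of_pos (by positivity : (0:ℝ) < K n w ^ 4), abs_of_pos (by norm_num : (0:ℝ) < 3)]
        gcongr
      exact (abs_add_le _ _).trans (add_le_add c1 c2)
  · intro δ hδ hδ1
    obtain ⟨X, hX, ht⟩ := h.tail hC0 hδ hδ1
    refine ⟨X, fun x hx => ?_⟩
    have hl : Tendsto (fun n => |K n x - κ x|) (hyperfilter ℕ : Filter ℕ) (nhds |k x - κ x|) :=
      ((hk x).sub_const _).abs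
    refine le_of_tendsto hl (hle ?_)
    have ev2 : ∀ᶠ n : ℕ in atTop, |x| ≤ (n : ℝ) := tendsto_natCast_atTop_atTop.eventually_ge_atTop _
    filter_upwards [ev2] with n hn
    exact ht _ _ _ _ _ (hA n) x hx (by linarith)

lemma TFBase.asym {a C : ℝ} {κ κ1 κ2 κ3 : ℝ → ℝ} (h : TFBase a C κ κ1 κ2 κ3) {K : ℝ → ℝ}
    (hK : ∀ δ : ℝ, 0 < δ → δ ≤ 1 → ∃ X : ℝ, ∀ x, X ≤ |x| → |K x - κ x| ≤ δ * κ x)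
    {e : ℝ} (he : 0 < e) : ∃ X : ℝ, ∀ x, X ≤ |x| → |(|x| ^ ((2 : ℝ) / 3) * K x) - 1| < e := by
  have hC := h.C0
  obtain ⟨δ, hδ0, hδ1, hδ2⟩ : ∃ δ : ℝ, 0 < δ ∧ δ ≤ 1 ∧ δ * (2 * (1 + C)) < e := by
    refine ⟨min 1 (e / (4 * (1 + C))), by positivity, min_le_left _ _, ?_⟩
    have := min_le_right 1 (e / (4 * (1 + C)))
    rw [le_div_iff₀ (by positivity)] at this
    linarith
  obtain ⟨X1, h1⟩ := hK δ hδ0 hδ1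
  obtain ⟨X2, -, h2⟩ := tfphi_small hδ0
  refine ⟨max X1 X2, fun x hx => ?_⟩
  have k1 := h1 x ((le_max_left _ _).trans hx)
  have k2 := h2 x ((le_max_right _ _).trans hx)
  have p0 := tfphi_pos x
  have p1 := tfphi_le_one x
  have p3 := tfphi_cube x
  have lo := h.lo x
  have hi := h.hi x
  set p := tfphi x
  set s := |x| ^ ((2 : ℝ) / 3) with hs
  have hs0 : 0 ≤ s := by positivity
  have hs3 : s ^ 3 = x ^ 2 := by
    rw [hs, ← Real.rpow_natCast, ← Real.rpow_mul (abs_nonneg _)]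
    norm_num
  have ht3 : (s * p) ^ 3 = 1 - p ^ 3 := by
    rw [mul_pow, hs3]; linear_combination p3
  have ht0 : 0 ≤ s * p := by positivity
  have hp3 : p ^ 3 ≤ p := pow_le_of_le_one p0.le p1 (by norm_num)
  have ht1 : s * p ≤ 1 := by
    by_contra hc
    push Not at hc
    have : 1 < (s * p) ^ 3 := one_lt_pow₀ hc (by norm_num)
    have : 0 < p ^ 3 := by positivity
    linarith
  have ht2 : 1 - p ≤ s * p := by
    have : (s * p) ^ 3 ≤ s * p := pow_le_of_le_one ht0 ht1 (by norm_num)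
    linarith
  have hκ1 : s * κ x ≤ 1 + C * p := by
    have q1 : s * κ x ≤ s * (p + C * p ^ 6) := mul_le_mul_of_nonneg_left hi hs0
    have q2 : s * (p + C * p ^ 6) = s * p + C * (s * p) * p ^ 5 := by ring
    have q3 : p ^ 5 ≤ p := pow_le_of_le_one p0.le p1 (by norm_num)
    have q4 : C * (s * p) * p ^ 5 ≤ C * 1 * p := by gcongr
    linarith
  have hκ2 : 1 - p ≤ s * κ x := ht2.trans (mul_le_mul_of_nonneg_left lo hs0)
  have hκ3 : s * |K x - κ x| ≤ δ * (1 + C) := by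
    have q1 : s * |K x - κ x| ≤ s * (δ * κ x) := mul_le_mul_of_nonneg_left k1 hs0
    have q2 : δ * (s * κ x) ≤ δ * (1 + C * p) := mul_le_mul_of_nonneg_left hκ1 hδ0.le
    have q3 : C * p ≤ C * 1 := mul_le_mul_of_nonneg_left p1 hC.le
    have q4 : δ * (1 + C * p) ≤ δ * (1 + C) := mul_le_mul_of_nonneg_left (by linarith) hδ0.le
    linarith
  have hk := abs_le.1 (le_refl |K x - κ x|)
  have r1 : s * (K x - κ x) ≤ s * |K x - κ x| := mul_le_mul_of_nonneg_left hk.2 hs0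
  have r2 : s * (-|K x - κ x|) ≤ s * (K x - κ x) := mul_le_mul_of_nonneg_left hk.1 hs0
  have r3 : C * p ≤ C * δ := mul_le_mul_of_nonneg_left k2.le hC.le
  have r4 : 0 ≤ C * δ := by positivity
  rw [abs_lt]
  constructor <;> linarith

/-- For every real parameter `a` there exists a three times continuously
differentiable positive function `H : ℝ → ℝ` satisfying `(H''' + ξ² + a) H³ = 1` on all of `ℝ`
and such that `|ξ|^(2/3) * H ξ → 1` as `ξ → ±∞`. -/
theorem exists_solution_thin_film (a : ℝ) :
    ∃ H : ℝ → ℝ, ContDiff ℝ 3 H ∧ (∀ ξ : ℝ, 0 < H ξ) ∧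
      (∀ ξ : ℝ, (iteratedDeriv 3 H ξ + ξ ^ 2 + a) * (H ξ) ^ 3 = 1) ∧
      Tendsto (fun ξ : ℝ => |ξ| ^ ((2 : ℝ) / 3) * H ξ) atTop (nhds 1) ∧
      Tendsto (fun ξ : ℝ => |ξ| ^ ((2 : ℝ) / 3) * H ξ) atBot (nhds 1) := by
  obtain ⟨κ, κ1, κ2, κ3, C, b0, b1, b2, b3, b4, b5, b6, b7, b8⟩ := tf_base a
  have h : TFBase a C κ κ1 κ2 κ3 := ⟨b0, b1, b2, b3, b4, b5, b6, b7, b8⟩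
  obtain ⟨K, K1, K2, kpos, d0, d1, d2, hK⟩ := h.exists_sol
  have as : ∀ e : ℝ, 0 < e → ∃ X : ℝ, ∀ x, X ≤ |x| →
      |(|x| ^ ((2 : ℝ) / 3) * K (-x)) - 1| < e := by
    intro e he
    obtain ⟨X, hX⟩ := h.asym hK he
    refine ⟨X, fun x hx => ?_⟩
    have := hX (-x) (by rwa [abs_neg])
    rwa [abs_neg] at this
  have e0 : ∀ x, HasDerivAt (fun y => K (-y)) (-K1 (-x)) x := fun x => tf_refl (d0 (-x))
  have e1 : ∀ x, HasDerivAt (fun y => -K1 (-y)) (K2 (-x)) x := fun x => by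
    simpa using (tf_refl (d1 (-x))).fun_neg
  have e2 : ∀ x, HasDerivAt (fun y => K2 (-y)) (1 / (K (-x)) ^ 3 - x ^ 2 - a) x := fun x => by
    refine (tf_refl (d2 (-x))).congr_deriv ?_
    ring
  have D0 : deriv (fun y => K (-y)) = fun y => -K1 (-y) := funext fun x => (e0 x).deriv
  have D1 : deriv (fun y => -K1 (-y)) = fun y => K2 (-y) := funext fun x => (e1 x).deriv
  have D2 : deriv (fun y => K2 (-y)) = fun x => 1 / (K (-x)) ^ 3 - x ^ 2 - a :=
    funext fun x => (e2 x).deriv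
  have c0 : Continuous (fun y => K (-y)) := continuous_iff_continuousAt.2 fun x => (e0 x).continuousAt
  have c3 : Continuous (fun x => 1 / (K (-x)) ^ 3 - x ^ 2 - a) := by
    refine ((continuous_const.div (c0.pow 3) (fun x => ?_)).sub (continuous_pow 2)).sub continuous_const
    exact pow_ne_zero 3 (kpos (-x)).ne'
  refine ⟨fun y => K (-y), ?_, fun x => kpos _, ?_, ?_, ?_⟩
  · have s1 : ContDiff ℝ 1 (fun y => K2 (-y)) := by
      rw [contDiff_one_iff_deriv, D2]
      exact ⟨fun x => (e2 x).differentiableAt, c3⟩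
    have s2 : ContDiff ℝ (1 + 1) (fun y => -K1 (-y)) := by
      rw [contDiff_succ_iff_deriv, D1]
      exact ⟨fun x => (e1 x).differentiableAt, by simp, s1⟩
    have s3 : ContDiff ℝ (1 + 1 + 1) (fun y => K (-y)) := by
      rw [contDiff_succ_iff_deriv, D0]
      exact ⟨fun x => (e0 x).differentiableAt, fun h => absurd h (by decide), s2⟩
    have e : (3 : WithTop ℕ∞) = 1 + 1 + 1 := by norm_num
    rw [e]; exact s3
  · intro x
    have : iteratedDeriv 3 (fun y => K (-y)) x = 1 / (K (-x)) ^ 3 - x ^ 2 - a := by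
      rw [iteratedDeriv_succ', iteratedDeriv_succ', iteratedDeriv_succ', iteratedDeriv_zero, D0, D1, D2]
    rw [this]
    have := kpos (-x)
    field_simp
    ring
  · rw [Metric.tendsto_atTop]
    intro e he
    obtain ⟨X, hX⟩ := as e he
    exact ⟨X, fun x hx => hX x (hx.trans (le_abs_self x))⟩
  · rw [Metric.tendsto_nhds]
    intro e he
    obtain ⟨X, hX⟩ := as e he
    filter_upwards [eventually_le_atBot (-X)] with x hx
    exact hX x (by have := neg_le_abs x; linarith)
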